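/- Up to isomorphism, the oddly (4)-bipancyclic graphs on v vertices with at most v + 4 edges are: exactly 2 of order 9 and exactly 5 of order 13; in particular every such graph has v ∈ {9, 13}. -/

import Mathlib

open SimpleGraph

/-- The number of cycles of length `k` in `G`, counted as subgraphs of `G`
isomorphic to the cycle graph `C_k`. -/
noncomputable def cycleCount {V : Type*} (G : SimpleGraph V) (k : ℕ) : ℕ :=
  {H : G.Subgraph | Nonempty (H.coe ≃g cycleGraph k)}.ncard

/-- A bipartite graph on an odd number `v` of vertices with minimum degree at least `2`
is oddly `(r)`-bipancyclic if it contains precisely `r` cycles of each even length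
from `4` to `v - 1`. -/
def IsOddlyRBipancyclic {V : Type*} [Fintype V] (G : SimpleGraph V) (r : ℕ) : Prop :=
  G.Colorable 2 ∧ Odd (Fintype.card V) ∧ (∀ x : V, 2 ≤ (G.neighborSet x).ncard) ∧
    ∀ k : ℕ, 4 ≤ k → k ≤ Fintype.card V - 1 → Even k → cycleCount G k = r

/-- There are, up to isomorphism, exactly `N` graphs on `v` vertices with at most
`b` edges satisfying the given pancyclicity property with parameter `r`. -/
def ExactlyNUpToIso (r N v b : ℕ) : Prop :=
  ∃ Gs : Fin N → SimpleGraph (Fin v),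
    (∀ i j : Fin N, i ≠ j → IsEmpty (Gs i ≃g Gs j)) ∧
    (∀ i : Fin N, IsOddlyRBipancyclic (Gs i) r ∧ (Gs i).edgeSet.ncard ≤ b) ∧
    (∀ (W : Type) [Fintype W] (G : SimpleGraph W), Fintype.card W = v →
      G.edgeSet.ncard ≤ b → IsOddlyRBipancyclic G r → ∃ i : Fin N, Nonempty (G ≃g Gs i))

namespace OB

/-- `E` is the edge set of a cycle of length `n + 3`. -/
def IsCyc {V : Type*} (n : ℕ) (E : Set (Sym2 V)) : Prop :=
  ∃ f : Fin (n + 3) → V, Function.Injective f ∧ E = Set.range fun i => s(f i, f (i + 1))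

def cycs {V : Type*} (G : SimpleGraph V) (n : ℕ) : Set (Set (Sym2 V)) :=
  {E | IsCyc n E ∧ E ⊆ G.edgeSet}

lemma cg_adj {n : ℕ} {i j : Fin (n + 3)} :
    (cycleGraph (n + 3)).Adj i j ↔ j = i + 1 ∨ i = j + 1 := by
  rw [cycleGraph_adj (n := n + 1)]
  constructor
  · rintro (h | h)
    · right; rw [← h]; abel
    · left; rw [← h]; abel
  · rintro (h | h)
    · right; rw [h]; abel
    · left; rw [h]; abel

lemma cycleCount_eq {V : Type*} (G : SimpleGraph V) (n : ℕ) :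
    cycleCount G (n + 3) = (cycs G n).ncard := by
  unfold cycleCount
  refine Set.ncard_congr (fun H _ => H.edgeSet) ?_ ?_ ?_
  · rintro H ⟨φ⟩
    refine ⟨⟨fun i => (φ.symm i : V), ?_, ?_⟩, H.edgeSet_subset⟩
    · intro i j h
      exact φ.symm.injective (Subtype.ext h)
    · ext e
      induction e using Sym2.ind with
      | _ a b =>
      constructor
      · intro h
        have hab : H.Adj a b := h
        have h2 : H.coe.Adj ⟨a, H.edge_vert hab⟩ ⟨b, H.edge_vert hab.symm⟩ := hab
        rw [← φ.map_adj_iff, cg_adj] at h2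
        rcases h2 with h2 | h2
        · refine ⟨φ ⟨a, H.edge_vert hab⟩, ?_⟩
          simp only [← h2]
          simp
        · refine ⟨φ ⟨b, H.edge_vert hab.symm⟩, ?_⟩
          simp only [← h2]
          simp [Sym2.eq_swap]
      · rintro ⟨i, hi⟩
        have : H.coe.Adj (φ.symm i) (φ.symm (i + 1)) := by
          rw [φ.symm.map_adj_iff, cg_adj]; left; rfl
        have h3 : s((φ.symm i : V), (φ.symm (i + 1) : V)) ∈ H.edgeSet := this
        rw [← hi]; exact h3
  · intro H K hH hK h
    have key : ∀ H : G.Subgraph, Nonempty (H.coe ≃g cycleGraph (n + 3)) →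
        ∀ a, a ∈ H.verts ↔ ∃ b, H.Adj a b := by
      rintro H ⟨φ⟩ a
      constructor
      · intro ha
        have : H.coe.Adj ⟨a, ha⟩ (φ.symm (φ ⟨a, ha⟩ + 1)) := by
          rw [← φ.map_adj_iff, cg_adj]; left; simp
        exact ⟨_, this⟩
      · rintro ⟨b, hb⟩; exact H.edge_vert hb
    have hadj : ∀ a b, H.Adj a b ↔ K.Adj a b := by
      intro a b
      rw [← Subgraph.mem_edgeSet, ← Subgraph.mem_edgeSet]
      have h' : H.edgeSet = K.edgeSet := h
      rw [h']
    refine Subgraph.ext ?_ ?_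
    · ext a
      rw [key H hH, key K hK]
      simp only [hadj]
    · ext a b; exact hadj a b
  · rintro E ⟨⟨f, hf, rfl⟩, hE⟩
    have hadj : ∀ i, G.Adj (f i) (f (i + 1)) := fun i => hE ⟨i, rfl⟩
    let H : G.Subgraph :=
      { verts := Set.range f
        Adj := fun a b => s(a, b) ∈ Set.range fun i => s(f i, f (i + 1))
        adj_sub := fun {a b} h => hE h
        edge_vert := by
          rintro a b ⟨i, hi⟩
          simp only [Sym2.eq_iff] at hi
          rcases hi with ⟨h1, h2⟩ | ⟨h1, h2⟩
          · exact ⟨_, h1⟩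
          · exact ⟨_, h2⟩
        symm := by
          constructor
          intro a b h
          rwa [Sym2.eq_swap] }
    refine ⟨H, ⟨?_⟩, ?_⟩
    · refine (⟨Equiv.ofInjective f hf, ?_⟩ : cycleGraph (n + 3) ≃g H.coe).symm
      intro i j
      change s(f i, f j) ∈ (Set.range fun i => s(f i, f (i + 1))) ↔ _
      rw [cg_adj]
      constructor
      · rintro ⟨k, hk⟩
        simp only [Sym2.eq_iff] at hk
        rcases hk with ⟨h1, h2⟩ | ⟨h1, h2⟩
        · left; rw [← hf h1, ← hf h2]
        · right; rw [← hf h1, ← hf h2]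
      · rintro (h | h)
        · exact ⟨i, by rw [h]⟩
        · exact ⟨j, by rw [h, Sym2.eq_swap]⟩
    · ext e
      induction e using Sym2.ind with
      | _ a b => exact Iff.rfl

lemma IsCyc.map {V W : Type*} {n : ℕ} {E : Set (Sym2 V)} (h : IsCyc n E) (g : V ↪ W) :
    IsCyc n (Sym2.map g '' E) := by
  obtain ⟨f, hf, rfl⟩ := h
  refine ⟨g ∘ f, g.injective.comp hf, ?_⟩
  ext e; simp

lemma cycs_map_ncard {V W : Type*} (G : SimpleGraph V) (g : V ↪ W) (n : ℕ) :
    (cycs (G.map g) n).ncard = (cycs G n).ncard := by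
  symm
  refine Set.ncard_congr (fun E _ => Sym2.map g '' E) ?_ ?_ ?_
  · rintro E ⟨h1, h2⟩
    refine ⟨h1.map g, ?_⟩
    rw [SimpleGraph.edgeSet_map]
    exact Set.image_mono h2
  · intro E F _ _ h
    exact (Set.image_injective.mpr (Sym2.map.injective g.injective)) h
  · rintro E ⟨⟨f, hf, rfl⟩, hE⟩
    have hadj : ∀ i, (G.map g).Adj (f i) (f (i + 1)) := fun i => hE ⟨i, rfl⟩
    have hr : ∀ i, ∃ a, g a = f i := by
      intro i
      obtain ⟨a, b, _, h, _⟩ := (SimpleGraph.map_adj _ _ _ _).1 (hadj i)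
      exact ⟨a, h⟩
    choose f' hf' using hr
    refine ⟨Set.range fun i => s(f' i, f' (i + 1)), ⟨⟨f', ?_, rfl⟩, ?_⟩, ?_⟩
    · intro i j h
      apply hf; rw [← hf', ← hf', h]
    · rintro _ ⟨i, rfl⟩
      have := hadj i
      rw [← hf', ← hf'] at this
      simpa using this
    · ext e; simp [hf']

lemma cycleCount_map {V W : Type*} (G : SimpleGraph V) (g : V ↪ W) (n : ℕ) :
    cycleCount (G.map g) (n + 3) = cycleCount G (n + 3) := by
  rw [cycleCount_eq, cycleCount_eq, cycs_map_ncard]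

end OB

namespace OB

def PF {V : Type*} (G : SimpleGraph V) (n : ℕ) (u w : V) : Set (Fin (n + 3) → V) :=
  {g | Function.Injective g ∧ g 0 = u ∧ g (Fin.last _) = w ∧
    ∀ i : Fin (n + 2), G.Adj (g i.castSucc) (g i.succ)}

def IL {V : Type*} (G : SimpleGraph V) (w : V) (len : ℕ) (u : V) (S : Set V) : Set (List V) :=
  {l | l.length = len ∧ l.Nodup ∧ (∀ a ∈ l, a ∉ S) ∧ List.IsChain G.Adj (u :: (l ++ [w]))}

lemma last_add_one' (n : ℕ) : (Fin.last (n + 2)) + 1 = (0 : Fin (n + 3)) := by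
  simp

lemma castSucc_add_one' {n : ℕ} (i : Fin (n + 2)) : (i.castSucc + 1 : Fin (n + 3)) = i.succ := by
  simp

lemma PF_ncard {V : Type*} (G : SimpleGraph V) (n : ℕ) (u w : V) (huw : u ≠ w)
    (hn : ¬ G.Adj u w) :
    (PF G n u w).ncard = {E ∈ cycs (G ⊔ edge u w) n | s(u, w) ∈ E}.ncard := by
  refine Set.ncard_congr (fun g _ => Set.range fun i : Fin (n + 3) => s(g i, g (i + 1))) ?_ ?_ ?_
  · rintro g ⟨hg, h0, h1, hadj⟩
    refine ⟨⟨⟨g, hg, rfl⟩, ?_⟩, ⟨Fin.last _, ?_⟩⟩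
    · rintro _ ⟨i, rfl⟩
      induction i using Fin.lastCases with
      | last =>
        simp only [last_add_one', h0, h1]
        rw [mem_edgeSet]
        right
        rw [edge_adj]
        simp [huw.symm]
      | cast i =>
        simp only [castSucc_add_one']
        exact Or.inl (hadj i)
    · simp only [last_add_one', h0, h1]; exact Sym2.eq_swap
  · rintro g g' ⟨hg, h0, h1, hadj⟩ ⟨hg', h0', h1', hadj'⟩ h
    have key : ∀ k : ℕ, ∀ hk : k < n + 3, ∀ j (hj : j ≤ k), g ⟨j, by omega⟩ = g' ⟨j, by omega⟩ := by
      intro k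
      induction k with
      | zero =>
        intro hk j hj
        obtain rfl : j = 0 := by omega
        exact h0.trans h0'.symm
      | succ k ih =>
        intro hk j hj
        by_cases hj' : j ≤ k
        · exact ih (by omega) j hj'
        obtain rfl : j = k + 1 := by omega
        have e1 : (⟨k, by omega⟩ : Fin (n + 3)) + 1 = ⟨k + 1, hk⟩ := by
          have := castSucc_add_one' (n := n) ⟨k, by omega⟩
          simpa using this
        have hmem : s(g ⟨k, by omega⟩, g ⟨k + 1, hk⟩) ∈
            Set.range fun i : Fin (n + 3) => s(g' i, g' (i + 1)) := by
          beta_reduce at h; rw [← h]; exact ⟨⟨k, by omega⟩, by simp only [e1]⟩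
        obtain ⟨i, hi⟩ := hmem
        simp only [Sym2.eq_iff] at hi
        have hk' := ih (by omega) k le_rfl
        rcases hi with ⟨a, b⟩ | ⟨a, b⟩
        · rw [hk'] at a
          have := hg' a
          subst this
          rw [← b, e1]
        · rw [hk'] at b
          have hb := hg' b
          exfalso
          rcases Nat.eq_zero_or_pos k with rfl | hpos
          · have : i = Fin.last _ := by
              have h3 : i + 1 = Fin.last (n + 2) + 1 := by
                rw [last_add_one', hb]; rfl
              exact add_right_cancel h3
            rw [this, h1', ← h1] at a
            have := hg a
            rw [Fin.ext_iff] at this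
            simp at this
          · have e2 : (⟨k - 1, by omega⟩ : Fin (n + 3)) + 1 = ⟨k, by omega⟩ := by
              have := castSucc_add_one' (n := n) ⟨k - 1, by omega⟩
              rw [show (⟨k - 1, by omega⟩ : Fin (n + 2)).castSucc = (⟨k - 1, by omega⟩ : Fin (n + 3)) from rfl] at this
              rw [this]
              ext; simp; omega
            have : i = ⟨k - 1, by omega⟩ := by
              apply add_right_cancel (b := 1)
              rw [hb, e2]
            rw [this, ← ih (by omega) (k - 1) (by omega)] at a
            have := hg a
            rw [Fin.ext_iff] at this
            simp at this
            try omega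
    funext i
    exact key i.1 i.2 i.1 le_rfl
  · rintro E ⟨⟨⟨f, hf, rfl⟩, hE⟩, ⟨j, hj⟩⟩
    have hex : ∃ g : Fin (n + 3) → V, Function.Injective g ∧ g 0 = u ∧ g (Fin.last _) = w ∧
        (Set.range fun i : Fin (n + 3) => s(g i, g (i + 1))) =
        (Set.range fun i : Fin (n + 3) => s(f i, f (i + 1))) := by
      have hl : Fin.last (n + 2) = -1 := by
        rw [eq_neg_iff_add_eq_zero]; exact last_add_one' n
      simp only [Sym2.eq_iff] at hj
      rcases hj with ⟨a, b⟩ | ⟨a, b⟩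
      · refine ⟨fun i => f (j - i), ?_, ?_, ?_, ?_⟩
        · intro x y hxy
          have := hf hxy
          simpa using this
        · simpa using a
        · simp only [hl]; rw [sub_neg_eq_add]; exact b
        · ext e
          constructor
          · rintro ⟨i, rfl⟩
            refine ⟨j - (i + 1), ?_⟩
            simp only
            rw [Sym2.eq_swap]
            congr 3
            abel
          · rintro ⟨i, rfl⟩
            refine ⟨j - (i + 1), ?_⟩
            simp only
            rw [Sym2.eq_swap]
            congr 3 <;> abel
      · refine ⟨fun i => f (j + 1 + i), ?_, ?_, ?_, ?_⟩
        · intro x y hxy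
          have := hf hxy
          simpa using this
        · simpa using b
        · simp only [hl]; rw [← a]; congr 1; abel
        · ext e
          constructor
          · rintro ⟨i, rfl⟩
            refine ⟨j + 1 + i, ?_⟩
            change s(f (j + 1 + i), f (j + 1 + i + 1)) = s(f (j + 1 + i), f (j + 1 + (i + 1)))
            rw [add_assoc (j + 1) i 1]
          · rintro ⟨i, rfl⟩
            refine ⟨i - (j + 1), ?_⟩
            change s(f (j + 1 + (i - (j + 1))), f (j + 1 + (i - (j + 1) + 1))) = s(f i, f (i + 1))
            rw [show j + 1 + (i - (j + 1)) = i by abel,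
              show j + 1 + (i - (j + 1) + 1) = i + 1 by abel]
    obtain ⟨g, hg, h0, h1, hr⟩ := hex
    refine ⟨g, ⟨hg, h0, h1, ?_⟩, hr⟩
    intro i
    have hm : s(g i.castSucc, g i.succ) ∈ (G ⊔ edge u w).edgeSet := by
      apply hE
      rw [← hr]
      exact ⟨i.castSucc, by simp only [castSucc_add_one']⟩
    rw [mem_edgeSet, sup_adj, edge_adj] at hm
    rcases hm with hm | ⟨(⟨a, b⟩ | ⟨a, b⟩), -⟩
    · exact hm
    · rw [← h1] at b
      have hb := hg b
      rw [← h0] at a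
      have ha := hg a
      rw [Fin.ext_iff] at ha hb
      simp at ha hb
      rw [ha] at hb; simp at hb
    · rw [← h0] at b
      have hb := hg b
      rw [Fin.ext_iff] at hb
      simp at hb

lemma ofFn_split {V : Type*} {n : ℕ} (g : Fin (n + 3) → V) :
    List.ofFn g = g 0 :: (List.ofFn (fun i : Fin (n + 1) => g i.succ.castSucc) ++ [g (Fin.last _)]) := by
  rw [List.ofFn_succ, List.ofFn_succ', List.concat_eq_append]
  rfl

lemma PF_IL {V : Type*} (G : SimpleGraph V) (n : ℕ) (u w : V) (huw : u ≠ w) :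
    (PF G n u w).ncard = (IL G w (n + 1) u {u, w}).ncard := by
  refine Set.ncard_congr (fun g _ => List.ofFn (fun i : Fin (n + 1) => g i.succ.castSucc)) ?_ ?_ ?_
  · rintro g ⟨hg, h0, h1, hadj⟩
    refine ⟨by simp, ?_, ?_, ?_⟩
    · rw [List.nodup_ofFn]
      intro i j h
      have := hg h
      simpa using this
    · intro a ha
      rw [List.mem_ofFn] at ha
      obtain ⟨i, rfl⟩ := ha
      rintro (h | h)
      · rw [← h0] at h
        have := congrArg Fin.val (hg h)
        simp at this
      · rw [Set.mem_singleton_iff, ← h1] at h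
        have := hg h
        have hi := i.2
        simp [Fin.ext_iff] at this
        omega
    · have := ofFn_split g
      rw [h0, h1] at this
      rw [← this, List.isChain_iff_getElem]
      intro i hi
      simp only [List.length_ofFn] at hi
      simp only [List.getElem_ofFn]
      exact hadj ⟨i, by omega⟩
  · rintro g g' ⟨hg, h0, h1, hadj⟩ ⟨hg', h0', h1', hadj'⟩ h
    beta_reduce at h
    apply List.ofFn_injective
    rw [ofFn_split g, ofFn_split g', h, h0, h1, h0', h1']
  · rintro l ⟨hl, hnd, hS, hch⟩
    have hlen : (u :: (l ++ [w])).length = n + 3 := by simp [hl]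
    let g : Fin (n + 3) → V := fun i => (u :: (l ++ [w])).get (Fin.cast hlen.symm i)
    have hof : List.ofFn g = u :: (l ++ [w]) := by
      apply List.ext_get
      · simp [hl]
      · intro i h1 h2
        simp only [List.get_eq_getElem, List.getElem_ofFn, g]
        rfl
    have hnd' : (u :: (l ++ [w])).Nodup := by
      have h1 : u ∉ l := fun h => hS u h (by simp)
      have h2 : w ∉ l := fun h => hS w h (by simp)
      simp [List.nodup_append, h1, hnd, huw]
      intro a ha h; exact h2 (h ▸ ha)
    have hsp := ofFn_split g
    rw [hof] at hsp
    have e0 : u = g 0 := by rfl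
    have e1 : l ++ [w] = List.ofFn (fun i : Fin (n + 1) => g i.succ.castSucc) ++ [g (Fin.last _)] := by
      simpa using (List.cons.inj hsp).2
    have e2 := List.append_inj e1 (by simp [hl])
    refine ⟨g, ⟨?_, e0.symm, ?_, ?_⟩, e2.1.symm⟩
    · rw [← List.nodup_ofFn, hof]; exact hnd'
    · simpa using e2.2.symm
    · rw [← hof, List.isChain_iff_getElem] at hch
      intro i
      have := hch i.1 (by have := i.2; simp; omega)
      simp only [List.getElem_ofFn] at this
      exact this

lemma cycs_finite {V : Type*} (G : SimpleGraph V) (n : ℕ) (h : G.edgeSet.Finite) :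
    (cycs G n).Finite :=
  h.finite_subsets.subset fun _ hE => hE.2

lemma cycs_add {V : Type*} (G : SimpleGraph V) (n : ℕ) (u w : V) (hfin : G.edgeSet.Finite)
    (huw : u ≠ w) (hn : ¬ G.Adj u w) :
    (cycs (G ⊔ edge u w) n).ncard = (cycs G n).ncard + (IL G w (n + 1) u {u, w}).ncard := by
  have he : (G ⊔ edge u w).edgeSet = insert s(u, w) G.edgeSet := by
    ext e
    induction e using Sym2.ind with
    | _ a b =>
      rw [mem_edgeSet, sup_adj, edge_adj, Set.mem_insert_iff, Sym2.eq_iff, mem_edgeSet]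
      constructor
      · rintro (h | h)
        · exact Or.inr h
        · left; tauto
      · rintro (h | h)
        · right
          refine ⟨by tauto, ?_⟩
          rintro rfl
          rcases h with ⟨h1, h2⟩ | ⟨h1, h2⟩
          · exact huw (h1.symm.trans h2)
          · exact huw (h2.symm.trans h1)
        · exact Or.inl h
  have hfin' : (G ⊔ edge u w).edgeSet.Finite := by rw [he]; exact hfin.insert _
  rw [← PF_IL G n u w huw, PF_ncard G n u w huw hn]
  have hU : cycs (G ⊔ edge u w) n = cycs G n ∪ {E ∈ cycs (G ⊔ edge u w) n | s(u, w) ∈ E} := by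
    ext E
    constructor
    · intro hE
      by_cases hm : s(u, w) ∈ E
      · exact Or.inr ⟨hE, hm⟩
      · left
        refine ⟨hE.1, fun e hh => ?_⟩
        have := hE.2 hh
        rw [he] at this
        rcases this with rfl | h
        · exact absurd hh hm
        · exact h
    · rintro (hE | hE)
      · exact ⟨hE.1, hE.2.trans (by rw [he]; exact Set.subset_insert _ _)⟩
      · exact hE.1
  conv_lhs => rw [hU]
  rw [Set.ncard_union_eq _ (cycs_finite G n hfin)
    ((cycs_finite _ n hfin').subset (Set.sep_subset _ _))]
  rw [Set.disjoint_left]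
  intro E hE hE'
  exact hn (hE.2 hE'.2)

end OB

namespace OB
noncomputable section
def row (A u : Nat) : Nat := Nat.land (Nat.shiftRight A (Nat.mul 32 u)) 4294967295
def bit (u : Nat) : Nat := Nat.shiftLeft 1 u
def addE (A u w : Nat) : Nat := Nat.lor A (Nat.lor (bit (Nat.add (Nat.mul 32 u) w)) (bit (Nat.add (Nat.mul 32 w) u)))
def bsum (f : Nat → Nat) (n : Nat) : Nat → Nat :=
  Nat.rec (motive := fun _ => Nat → Nat) (fun _ => 0)
    (fun _ ih M => Nat.rec (motive := fun _ => Nat) 0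
      (fun p _ => Nat.add (f (Nat.log2 (Nat.succ p))) (ih (Nat.xor (Nat.succ p) (bit (Nat.log2 (Nat.succ p)))))) M) n
def pop (n : Nat) : Nat → Nat :=
  Nat.rec (motive := fun _ => Nat → Nat) (fun _ => 0)
    (fun _ ih M => Nat.rec (motive := fun _ => Nat) 0
      (fun p _ => Nat.succ (ih (Nat.land (Nat.succ p) p))) M) n
/-- number of paths with `k + 2` edges -/
def np (A w k : Nat) : Nat → Nat → Nat :=
  Nat.rec (motive := fun _ => Nat → Nat → Nat)
   (fun u vis => pop 32 (Nat.xor (Nat.land (row A u) (row A w)) (Nat.land (Nat.land (row A u) (row A w)) vis)))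
   (fun _ ih u vis => bsum (fun a => ih a (Nat.lor vis (bit a))) 32 (Nat.xor (row A u) (Nat.land (row A u) vis))) k
def np0 (k A u w : Nat) : Nat := np A w (Nat.sub k 3) u (Nat.lor (bit u) (bit w))
def x3 (A u w : Nat) : Nat :=
  Nat.land (Nat.land A (Nat.mul (Nat.land (Nat.shiftRight A u) 13407807933064345650616855954052280575871561581766254847276938654647315779524473594410390215120323278624403973746456073439568718650819676618587381889499137) 4294967295))
    (Nat.mul (row A w) 13407807933064345650616855954052280575871561581766254847276938654647315779524473594410390215120323278624403973746456073439568718650819676618587381889499137)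
def strip (n : Nat) : Nat → (Nat → Bool) → Bool :=
  Nat.rec (motive := fun _ => Nat → (Nat → Bool) → Bool)
    (fun X K => Nat.rec (motive := fun _ => Bool) (K 0) (fun _ _ => true) X)
    (fun n ih X K => Nat.rec (motive := fun _ => Bool) (K (Nat.succ n)) (fun p _ => ih (Nat.land (Nat.succ p) p) K) X) n

def bits (M : ℕ) : Finset ℕ := (Finset.range M).filter (fun i => M.testBit i = true)

lemma mem_bits {M i : ℕ} : i ∈ bits M ↔ M.testBit i = true := by
  simp only [bits, Finset.mem_filter, Finset.mem_range, and_iff_right_iff_imp]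
  intro h
  exact lt_of_lt_of_le Nat.lt_two_pow_self (Nat.ge_two_pow_of_testBit h)

lemma bit_eq (u : ℕ) : bit u = 2 ^ u := Nat.one_shiftLeft u

lemma bits_zero : bits 0 = ∅ := rfl

lemma bits_succ (p : ℕ) : bits (Nat.xor (p + 1) (bit (Nat.log2 (p + 1)))) =
    (bits (p + 1)).erase (Nat.log2 (p + 1)) := by
  ext i
  rw [Finset.mem_erase, mem_bits, mem_bits, bit_eq]
  change ((p + 1) ^^^ 2 ^ (p + 1).log2).testBit i = true ↔ _
  rw [Nat.testBit_xor, Nat.testBit_two_pow]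
  have h : (p + 1).testBit (p + 1).log2 = true := Nat.testBit_log2 (by omega)
  by_cases hi : (p + 1).log2 = i
  · subst hi; simp [h]
  · simp [hi]; tauto

lemma log2_mem_bits (p : ℕ) : Nat.log2 (p + 1) ∈ bits (p + 1) :=
  mem_bits.2 (Nat.testBit_log2 (by omega))

lemma bsum_eq (f : ℕ → ℕ) (n M : ℕ) (h : (bits M).card ≤ n) :
    bsum f n M = ∑ i ∈ bits M, f i := by
  induction n generalizing M with
  | zero =>
    rw [Finset.card_eq_zero.1 (by omega : (bits M).card = 0)]; rfl
  | succ n ih =>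
    cases M with
    | zero => rfl
    | succ p =>
      change f (Nat.log2 (p + 1)) + bsum f n (Nat.xor (p + 1) (bit (Nat.log2 (p + 1)))) = _
      rw [ih, bits_succ, Finset.add_sum_erase _ _ (log2_mem_bits p)]
      rw [bits_succ, Finset.card_erase_of_mem (log2_mem_bits p)]
      omega

lemma bits_div (M : ℕ) : (bits M).card = (bits (M / 2)).card + M % 2 := by
  have h : bits M = (bits (M / 2)).image Nat.succ ∪ (if M % 2 = 1 then {0} else ∅) := by
    ext i
    rw [mem_bits]
    cases i with
    | zero => 
      rw [Nat.testBit_zero]; simp; split_ifs with h <;> simp [h]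
    | succ i =>
      rw [Nat.testBit_succ]
      have : i + 1 ∉ (if M % 2 = 1 then ({0} : Finset ℕ) else ∅) := by split_ifs <;> simp
      simp [this, mem_bits]
  rw [h, Finset.card_union_of_disjoint, Finset.card_image_of_injective _ Nat.succ_injective]
  · congr 1
    split_ifs with h <;> simp <;> omega
  · rw [Finset.disjoint_left]
    intro a ha
    obtain ⟨b, _, rfl⟩ := Finset.mem_image.1 ha
    split_ifs <;> simp

lemma bits_land (p : ℕ) : (bits (Nat.land (p + 1) p)).card + 1 = (bits (p + 1)).card := by
  change (bits ((p + 1) &&& p)).card + 1 = _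
  induction p using Nat.strong_induction_on with
  | _ p ih =>
    rw [bits_div, bits_div (p + 1), Nat.and_div_two]
    have h2 : ((p + 1) &&& p) % 2 = 0 := by
      have := Nat.testBit_zero ((p + 1) &&& p)
      rw [Nat.testBit_and, Nat.testBit_zero, Nat.testBit_zero] at this
      by_contra hc
      have h1 : ((p + 1) &&& p) % 2 = 1 := by omega
      simp [h1] at this
      omega
    rw [h2]
    rcases Nat.even_or_odd' p with ⟨q, rfl | rfl⟩
    · rw [show (2 * q + 1) / 2 = q by omega, show 2 * q / 2 = q by omega, Nat.and_self]
      omega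
    · have := ih q (by omega)
      rw [show (2 * q + 1 + 1) / 2 = q + 1 by omega, show (2 * q + 1) / 2 = q by omega]
      omega

lemma pop_eq (n M : ℕ) (h : (bits M).card ≤ n) : pop n M = (bits M).card := by
  induction n generalizing M with
  | zero => change 0 = _; omega
  | succ n ih =>
    cases M with
    | zero => rfl
    | succ p =>
      change (pop n (Nat.land (p + 1) p)) + 1 = _
      have := bits_land p
      rw [ih _ (by omega), this]

lemma bits_card_pos (p : ℕ) : 0 < (bits (p + 1)).card :=
  Finset.card_pos.2 ⟨_, log2_mem_bits p⟩

lemma strip_eq (n X : ℕ) (K : ℕ → Bool) : strip n X K =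
    if (bits X).card ≤ n then K (n - (bits X).card) else true := by
  induction n generalizing X with
  | zero =>
    cases X with
    | zero => rfl
    | succ p =>
      have := bits_card_pos p
      rw [if_neg (by omega)]; rfl
  | succ n ih =>
    cases X with
    | zero => rfl
    | succ p =>
      change strip n (Nat.land (p + 1) p) K = _
      have := bits_land p
      rw [ih]
      by_cases h : (bits (p + 1)).card ≤ n + 1
      · rw [if_pos h, if_pos (by omega)]; congr 1; omega
      · rw [if_neg h, if_neg (by omega)]

/-- `A` is the adjacency bitmap of `G`, a graph living on `{0, …, 16}`. -/
def Rep (A : ℕ) (G : SimpleGraph ℕ) : Prop :=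
  (∀ u w, w < 32 → (A.testBit (32 * u + w) = true ↔ G.Adj u w)) ∧ ∀ u w, G.Adj u w → w < 17

lemma row_testBit (A u i : ℕ) : (row A u).testBit i = true ↔ i < 32 ∧ A.testBit (32 * u + i) = true := by
  change ((A >>> (32 * u)) &&& 4294967295).testBit i = true ↔ _
  rw [show (4294967295 : ℕ) = 2 ^ 32 - 1 by norm_num, Nat.testBit_and, Nat.testBit_shiftRight,
    Nat.testBit_two_pow_sub_one]
  simp [and_comm]

lemma Rep.row {A : ℕ} {G : SimpleGraph ℕ} (h : Rep A G) (u i : ℕ) :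
    (OB.row A u).testBit i = true ↔ G.Adj u i := by
  rw [row_testBit]
  constructor
  · rintro ⟨h1, h2⟩; exact (h.1 _ _ h1).1 h2
  · intro hh
    have := h.2 _ _ hh
    exact ⟨by omega, (h.1 _ _ (by omega)).2 hh⟩

lemma Rep.addE {A : ℕ} {G : SimpleGraph ℕ} (h : Rep A G) {u w : ℕ} (hu : u < 17) (hw : w < 17)
    (huw : u ≠ w) : Rep (OB.addE A u w) (G ⊔ edge u w) := by
  constructor
  · intro a b hb
    change (A ||| (bit (32 * u + w) ||| bit (32 * w + u))).testBit (32 * a + b) = true ↔ _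
    rw [bit_eq, bit_eq, Nat.testBit_or, Nat.testBit_or, Nat.testBit_two_pow, Nat.testBit_two_pow,
      sup_adj, edge_adj, ← h.1 a b hb]
    simp only [Bool.or_eq_true, decide_eq_true_eq]
    refine or_congr Iff.rfl ?_
    omega
  · intro a b hab
    rw [sup_adj, edge_adj] at hab
    rcases hab with hab | hab
    · exact h.2 _ _ hab
    · omega

lemma Rep.zero : Rep 0 ⊥ := ⟨by simp, by simp⟩

lemma Rep.unique {A : ℕ} {G H : SimpleGraph ℕ} (h : Rep A G) (h' : Rep A H) : G = H := by
  have key : ∀ {G H : SimpleGraph ℕ}, Rep A G → Rep A H → ∀ a b, G.Adj a b → H.Adj a b := by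
    intro G H h h' a b hab
    have := h.2 _ _ hab
    exact (h'.1 _ _ (by omega)).1 ((h.1 _ _ (by omega)).2 hab)
  ext a b
  exact ⟨key h h' a b, key h' h a b⟩

lemma card_bits_le {M n : ℕ} (h : ∀ i, M.testBit i = true → i < n) : (bits M).card ≤ n := by
  calc (bits M).card ≤ (Finset.range n).card :=
        Finset.card_le_card fun i hi => Finset.mem_range.2 (h i (mem_bits.1 hi))
    _ = n := Finset.card_range n

lemma diff_testBit (x v i : ℕ) : (Nat.xor x (Nat.land x v)).testBit i = true ↔
    x.testBit i = true ∧ ¬ v.testBit i = true := by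
  change (x ^^^ (x &&& v)).testBit i = true ↔ _
  rw [Nat.testBit_xor, Nat.testBit_and]
  cases x.testBit i <;> cases v.testBit i <;> simp

lemma np_spec {A : ℕ} {G : SimpleGraph ℕ} (h : Rep A G) (w k u vis : ℕ) :
    ∃ F : Finset (List ℕ), (F : Set (List ℕ)) = IL G w (k + 1) u {a | vis.testBit a = true} ∧
      F.card = np A w k u vis := by
  induction k generalizing u vis with
  | zero =>
    set M := Nat.xor (Nat.land (OB.row A u) (OB.row A w)) (Nat.land (Nat.land (OB.row A u) (OB.row A w)) vis) with hM
    have hmem : ∀ i, M.testBit i = true ↔ (G.Adj u i ∧ G.Adj w i) ∧ ¬ vis.testBit i = true := by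
      intro i
      rw [hM, diff_testBit, ← h.row u i, ← h.row w i]
      change ((OB.row A u &&& OB.row A w).testBit i = true ∧ _) ↔ _
      rw [Nat.testBit_and]; simp
    refine ⟨(bits M).image fun a => [a], ?_, ?_⟩
    · ext l
      simp only [Finset.coe_image, Set.mem_image, Finset.mem_coe, mem_bits, hmem, IL, Set.mem_ofPred_eq]
      constructor
      · rintro ⟨a, ⟨⟨h1, h2⟩, h3⟩, rfl⟩
        refine ⟨rfl, by simp, by simpa using h3, ?_⟩
        simp [h1, h2.symm]
      · rintro ⟨h1, h2, h3, h4⟩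
        obtain ⟨a, rfl⟩ := List.length_eq_one_iff.1 h1
        simp at h4 h3
        exact ⟨a, ⟨⟨h4.1, h4.2.symm⟩, by simpa using h3⟩, rfl⟩
    · rw [Finset.card_image_of_injective _ (by intro a b; simp)]
      change _ = pop 32 M
      rw [pop_eq]
      refine (card_bits_le (n := 17) ?_).trans (by norm_num)
      intro i hi
      exact h.2 _ _ ((hmem i).1 hi).1.1
  | succ k ih =>
    choose F hF hc using ih
    set M := Nat.xor (OB.row A u) (Nat.land (OB.row A u) vis) with hM
    have hmem : ∀ i, M.testBit i = true ↔ G.Adj u i ∧ ¬ vis.testBit i = true := by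
      intro i
      rw [hM, diff_testBit, ← h.row u i]
    have hvis : ∀ a b, (Nat.lor vis (bit a)).testBit b = true ↔ vis.testBit b = true ∨ b = a := by
      intro a b
      change (vis ||| bit a).testBit b = true ↔ _
      rw [bit_eq, Nat.testBit_or, Nat.testBit_two_pow, Bool.or_eq_true, decide_eq_true_eq,
        @eq_comm _ a b]
    refine ⟨(bits M).biUnion fun a => (F a (Nat.lor vis (bit a))).image (List.cons a), ?_, ?_⟩
    · ext l
      simp only [Finset.coe_biUnion, Set.mem_iUnion, Finset.coe_image, hF, Finset.mem_coe, mem_bits, hmem]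
      constructor
      · rintro ⟨a, ⟨h1, h2⟩, l, ⟨h3, h4, h5, h6⟩, rfl⟩
        refine ⟨by simp [h3], ?_, ?_, ?_⟩
        · rw [List.nodup_cons]
          refine ⟨fun ha => h5 a ha ?_, h4⟩
          exact (hvis a a).2 (Or.inr rfl)
        · intro b hb
          rw [List.mem_cons] at hb
          rcases hb with rfl | hb
          · exact h2
          · intro hv
            exact h5 b hb ((hvis a b).2 (Or.inl hv))
        · rw [List.cons_append, List.isChain_cons_cons]
          exact ⟨h1, h6⟩
      · rintro ⟨h3, h4, h5, h6⟩
        cases l with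
        | nil => simp at h3
        | cons a l =>
          rw [List.cons_append, List.isChain_cons_cons] at h6
          rw [List.nodup_cons] at h4
          refine ⟨a, ⟨h6.1, h5 a (by simp)⟩, l, ⟨by simpa using h3, h4.2, ?_, h6.2⟩, rfl⟩
          intro b hb hv
          rcases (hvis a b).1 hv with hv | rfl
          · exact h5 b (by simp [hb]) hv
          · exact h4.1 hb
    · rw [Finset.card_biUnion]
      · change _ = bsum (fun a => np A w k a (Nat.lor vis (bit a))) 32 M
        rw [bsum_eq]
        · refine Finset.sum_congr rfl fun a _ => ?_
          rw [Finset.card_image_of_injective _ (List.cons_injective), hc]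
        refine (card_bits_le (n := 17) ?_).trans (by norm_num)
        intro i hi
        exact h.2 _ _ ((hmem i).1 hi).1
      · intro a _ b _ hab
        change Disjoint _ _
        rw [Finset.disjoint_left]
        intro l hl hl'
        obtain ⟨l1, _, rfl⟩ := Finset.mem_image.1 hl
        obtain ⟨l2, _, h2⟩ := Finset.mem_image.1 hl'
        exact hab (List.cons.inj h2).1.symm

lemma np0_spec {A : ℕ} {G : SimpleGraph ℕ} (h : Rep A G) (n u w : ℕ) :
    np0 (n + 3) A u w = (IL G w (n + 1) u {u, w}).ncard := by
  obtain ⟨F, hF, hc⟩ := np_spec h w n u (Nat.lor (bit u) (bit w))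
  have e : {a | (Nat.lor (bit u) (bit w)).testBit a = true} = ({u, w} : Set ℕ) := by
    ext a
    change (bit u ||| bit w).testBit a = true ↔ _
    rw [bit_eq, bit_eq, Nat.testBit_or, Nat.testBit_two_pow, Nat.testBit_two_pow, Bool.or_eq_true,
      decide_eq_true_eq, decide_eq_true_eq, @eq_comm _ u a, @eq_comm _ w a]
    rfl
  rw [← e, ← hF, Set.ncard_coe_finset, hc]
  rfl

def COL : ℕ → ℕ
  | 0 => 0
  | n + 1 => 1 + 2 ^ 32 * COL n

lemma mulFL (a b c : ℕ) (hb : b < 32) (h : ∀ i, c.testBit i = true → 32 ∣ i) :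
    (c * 4294967295).testBit (32 * a + b) = c.testBit (32 * a) := by
  have h0 : c % 2 ^ 32 < 2 ^ 1 := by
    apply Nat.lt_pow_two_of_testBit
    intro i hi
    rw [Nat.testBit_mod_two_pow]
    by_contra hc
    simp only [Bool.not_eq_false, Bool.and_eq_true, decide_eq_true_eq] at hc
    have := h i hc.2
    omega
  have hc : c = 2 ^ 32 * (c / 2 ^ 32) + c % 2 ^ 32 := (Nat.div_add_mod _ _).symm
  have hq : ∀ i, (c / 2 ^ 32).testBit i = c.testBit (i + 32) := by
    intro i
    rw [Nat.testBit_div_two_pow]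
  induction a generalizing c with
  | zero =>
    rw [hc, Nat.add_mul, Nat.mul_assoc, Nat.testBit_two_pow_mul_add _ (by omega),
      Nat.testBit_two_pow_mul_add _ (by omega), if_pos (by omega), if_pos (by omega)]
    rcases (by omega : c % 2 ^ 32 = 0 ∨ c % 2 ^ 32 = 1) with h1 | h1
    · rw [h1]; simp
    · rw [h1, Nat.one_mul, show (4294967295 : ℕ) = 2 ^ 32 - 1 by norm_num,
        Nat.testBit_two_pow_sub_one]
      simp; omega
  | succ a ih =>
    rw [hc, Nat.add_mul, Nat.mul_assoc, Nat.testBit_two_pow_mul_add _ (by omega),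
      Nat.testBit_two_pow_mul_add _ (by omega), if_neg (by omega), if_neg (by omega)]
    rw [show 32 * (a + 1) + b - 32 = 32 * a + b by omega, show 32 * (a + 1) - 32 = 32 * a by omega]
    have hd : ∀ i, (c / 2 ^ 32).testBit i = true → 32 ∣ i := by
      intro i hi
      rw [hq] at hi
      have := h _ hi
      omega
    refine ih _ hd ?_ ?_ ?_
    · apply Nat.lt_pow_two_of_testBit
      intro i hi
      rw [Nat.testBit_mod_two_pow]
      by_contra hc
      simp only [Bool.not_eq_false, Bool.and_eq_true, decide_eq_true_eq] at hc
      have := hd i hc.2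
      omega
    · exact (Nat.div_add_mod _ _).symm
    · intro i
      rw [Nat.testBit_div_two_pow]

lemma mulCOL (n a b r : ℕ) (hb : b < 32) (hr : r < 2 ^ 32) :
    (r * COL n).testBit (32 * a + b) = (decide (a < n) && r.testBit b) := by
  induction n generalizing a with
  | zero => simp [COL]
  | succ n ih =>
    have : r * COL (n + 1) = 2 ^ 32 * (r * COL n) + r := by rw [COL]; ring
    rw [this, Nat.testBit_two_pow_mul_add _ hr]
    cases a with
    | zero => rw [if_pos (by omega)]; simp
    | succ a =>
      rw [if_neg (by omega), show 32 * (a + 1) + b - 32 = 32 * a + b by omega, ih]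
      simp

lemma x3_testBit {A : ℕ} {G : SimpleGraph ℕ} (h : Rep A G) (u w a b : ℕ) (hu : u < 17) (hb : b < 32) :
    (x3 A u w).testBit (32 * a + b) = true ↔ G.Adj u a ∧ G.Adj a b ∧ G.Adj b w := by
  have hC : 13407807933064345650616855954052280575871561581766254847276938654647315779524473594410390215120323278624403973746456073439568718650819676618587381889499137 = COL 17 := by
    norm_num [COL]
  change ((A &&& ((A >>> u) &&& 13407807933064345650616855954052280575871561581766254847276938654647315779524473594410390215120323278624403973746456073439568718650819676618587381889499137) * 4294967295) &&&
    (OB.row A w * 13407807933064345650616855954052280575871561581766254847276938654647315779524473594410390215120323278624403973746456073439568718650819676618587381889499137)).testBit (32 * a + b) = true ↔ _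
  rw [hC]
  have hcol : ∀ i, (COL 17).testBit i = true ↔ 32 ∣ i ∧ i < 544 := by
    intro i
    have := mulCOL 17 (i / 32) (i % 32) 1 (by omega) (by norm_num)
    rw [Nat.div_add_mod, Nat.one_mul] at this
    rw [this, Bool.and_eq_true, decide_eq_true_eq, Nat.testBit_one_eq_true_iff_self_eq_zero]
    omega
  have hrow : OB.row A w < 2 ^ 32 := by
    apply Nat.lt_pow_two_of_testBit
    intro i hi
    by_contra hc
    have := ((row_testBit A w i).1 (by simpa using hc)).1
    omega
  rw [Nat.testBit_and, Nat.testBit_and, mulCOL _ _ _ _ hb hrow, mulFL _ _ _ hb]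
  · simp only [Bool.and_eq_true, decide_eq_true_eq, Nat.testBit_and, hcol, Nat.testBit_shiftRight, h.row w b,
      h.1 a b hb, Nat.add_comm u, h.1 a u (by omega)]
    constructor
    · rintro ⟨⟨h1, h2, _⟩, _, h3⟩; exact ⟨h2.symm, h1, h3.symm⟩
    · rintro ⟨h1, h2, h3⟩
      have := h.2 _ _ h1
      exact ⟨⟨h2, h1.symm, by omega, by omega⟩, by omega, h3.symm⟩
  · intro i hi
    rw [Nat.testBit_and, Bool.and_eq_true] at hi
    exact ((hcol i).1 hi.2).1

lemma x3_spec {A : ℕ} {G : SimpleGraph ℕ} (h : Rep A G) (u w : ℕ) (hu : u < 17)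
    (hn : ¬ G.Adj u w) : (bits (x3 A u w)).card = (IL G w 2 u {u, w}).ncard := by
  have e : IL G w 2 u {u, w} = ((bits (x3 A u w)).image fun i => [i / 32, i % 32] : Finset (List ℕ)) := by
    ext l
    simp only [Finset.coe_image, Set.mem_image, Finset.mem_coe, mem_bits]
    constructor
    · rintro ⟨h1, h2, h3, h4⟩
      obtain ⟨a, b, rfl⟩ := List.length_eq_two.1 h1
      simp at h4
      have := h.2 _ _ h4.2.1
      refine ⟨32 * a + b, (x3_testBit h u w a b hu (by omega)).2 h4, ?_⟩
      rw [show (32 * a + b) / 32 = a by omega, show (32 * a + b) % 32 = b by omega]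
    · rintro ⟨i, hi, rfl⟩
      rw [← Nat.div_add_mod i 32, x3_testBit h u w _ _ hu (by omega)] at hi
      obtain ⟨h1, h2, h3⟩ := hi
      refine ⟨rfl, by simpa using h2.ne, ?_, by simp [h1, h2, h3]⟩
      simp only [List.mem_cons, List.not_mem_nil, or_false, forall_eq_or_imp, forall_eq,
        Set.mem_insert_iff, Set.mem_singleton_iff, not_or]
      refine ⟨⟨h1.ne', ?_⟩, ?_, h3.ne⟩
      · intro hh; rw [hh] at h1; exact hn h1
      · intro hh; rw [hh] at h3; exact hn h3
  rw [e, Set.ncard_coe_finset, Finset.card_image_of_injective]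
  intro i j hij
  simp at hij
  omega

end
end OB

namespace OB
noncomputable section
def band (a b : Bool) : Bool := Bool.rec (motive := fun _ => Bool) false b a
def force (x : Nat) (f : Nat → Bool) : Bool :=
  Nat.rec (motive := fun _ => Bool) (f 0) (fun p _ => f (Nat.succ p)) x
def srch (fin : Nat → List (Nat × Nat × Nat) → Bool) (l : List (Nat × Nat)) : Nat → Nat → List (Nat × Nat × Nat) → Nat → Bool :=
  List.rec (motive := fun _ => Nat → Nat → List (Nat × Nat × Nat) → Nat → Bool)
    (fun _ _ _ _ => true)
    (fun e _ ih r A H need => Nat.rec (motive := fun _ => Bool) true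
      (fun r' _ => Prod.rec (motive := fun _ => Bool) (fun u w => band
        (strip need (x3 A u w) (fun need' => 
          Nat.rec (motive := fun _ => Bool) 
             (Nat.rec (motive := fun _ => Bool) (fin (addE A u w) ((A,u,w) :: H)) (fun _ _ => true) need')
             (fun r'' _ => force (addE A u w) (fun A' => band (Nat.rec (motive := fun _ => Bool) (fin A' ((A,u,w) :: H)) (fun _ _ => true) need') 
                (ih (Nat.succ r'') A' ((A,u,w) :: H) need'))) r'))
        (ih (Nat.succ r') A H need)) e) r) l
def cnt (k : Nat) (H : List (Nat × Nat × Nat)) : Nat :=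
  List.rec (motive := fun _ => Nat) 0 (fun e _ ih => Nat.add (np0 k e.1 e.2.1 e.2.2) ih) H
def okl (H : List (Nat × Nat × Nat)) (tb : Bool) (l : List (Nat × Nat)) : Bool :=
  List.rec (motive := fun _ => Bool) tb (fun k _ ih => Bool.rec (motive := fun _ => Bool) true ih (Nat.beq (cnt k.1 H) k.2)) l

def bm : ℕ → List (ℕ × ℕ) → ℕ
  | A, [] => A
  | A, e :: T => bm (addE A e.1 e.2) T
def gr : SimpleGraph ℕ → List (ℕ × ℕ) → SimpleGraph ℕ
  | G, [] => G
  | G, e :: T => gr (G ⊔ edge e.1 e.2) T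
def Val : SimpleGraph ℕ → List (ℕ × ℕ) → Prop
  | _, [] => True
  | G, e :: T => (e.1 < 17 ∧ e.2 < 17 ∧ e.1 ≠ e.2 ∧ ¬ G.Adj e.1 e.2) ∧ Val (G ⊔ edge e.1 e.2) T
def cntT (k : ℕ) : ℕ → List (ℕ × ℕ) → ℕ
  | _, [] => 0
  | A, e :: T => np0 k A e.1 e.2 + cntT k (addE A e.1 e.2) T
def xsum : ℕ → List (ℕ × ℕ) → ℕ
  | _, [] => 0
  | A, e :: T => (bits (x3 A e.1 e.2)).card + xsum (addE A e.1 e.2) T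
def hist : List (ℕ × ℕ × ℕ) → ℕ → List (ℕ × ℕ) → List (ℕ × ℕ × ℕ)
  | H, _, [] => H
  | H, A, e :: T => hist ((A, e.1, e.2) :: H) (addE A e.1 e.2) T

lemma band_eq (a b : Bool) : band a b = (a && b) := by cases a <;> rfl
lemma force_eq (x : ℕ) (f : ℕ → Bool) : force x f = f x := by cases x <;> rfl

lemma srch_sound (fin) (l : List (ℕ × ℕ)) : ∀ (r A : ℕ) (H : List (ℕ × ℕ × ℕ)) (need : ℕ) (T : List (ℕ × ℕ)),
    srch fin l r A H need = true → T.Sublist l → T ≠ [] → T.length ≤ r → xsum A T = need →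
    fin (bm A T) (hist H A T) = true := by
  induction l with
  | nil =>
    intro r A H need T _ h1 h2
    exact absurd (List.sublist_nil.1 h1) h2
  | cons e l ih =>
    intro r A H need T hs hT hne hlen hx
    obtain ⟨u, w⟩ := e
    cases r with
    | zero => exact absurd (List.length_eq_zero_iff.1 (by omega)) hne
    | succ r =>
      change band (strip need (x3 A u w) (fun need' => 
          Nat.rec (motive := fun _ => Bool) 
             (Nat.rec (motive := fun _ => Bool) (fin (addE A u w) ((A,u,w) :: H)) (fun _ _ => true) need')
             (fun r'' _ => force (addE A u w) (fun A' => band (Nat.rec (motive := fun _ => Bool) (fin A' ((A,u,w) :: H)) (fun _ _ => true) need') 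
                (srch fin l (Nat.succ r'') A' ((A,u,w) :: H) need'))) r))
        (srch fin l (Nat.succ r) A H need) = true at hs
      rw [band_eq, Bool.and_eq_true, strip_eq] at hs
      cases hT with
      | cons _ hT => exact ih _ _ _ _ _ hs.2 hT hne hlen hx
      | cons_cons _ hT =>
        rename_i T
        have hx' : (bits (x3 A u w)).card + xsum (addE A u w) T = need := hx
        have h1 := hs.1
        rw [if_pos (by omega), show need - (bits (x3 A u w)).card = xsum (addE A u w) T by omega] at h1
        change fin (bm (addE A u w) T) (hist ((A, u, w) :: H) (addE A u w) T) = true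
        by_cases hT0 : T = []
        · subst hT0
          change fin (addE A u w) ((A, u, w) :: H) = true
          change (Nat.rec (motive := fun _ => Bool) (fin (addE A u w) ((A,u,w) :: H))
            (fun r'' _ => force (addE A u w) (fun A' => band (fin A' ((A,u,w) :: H))
                (srch fin l (Nat.succ r'') A' ((A,u,w) :: H) 0))) r : Bool) = true at h1
          cases r with
          | zero => exact h1
          | succ r =>
            change force _ _ = true at h1
            rw [force_eq, band_eq, Bool.and_eq_true] at h1
            exact h1.1
        · cases r with
          | zero =>
            simp only [List.length_cons] at hlen
            exact absurd (List.length_eq_zero_iff.1 (by omega)) hT0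
          | succ r =>
            change force _ _ = true at h1
            rw [force_eq, band_eq, Bool.and_eq_true] at h1
            refine ih _ _ _ _ _ h1.2 hT hT0 ?_ rfl
            simpa using hlen

lemma cnt_hist (k : ℕ) (T : List (ℕ × ℕ)) : ∀ A H, cnt k (hist H A T) = cnt k H + cntT k A T := by
  induction T with
  | nil => intro A H; rfl
  | cons e T ih =>
    intro A H
    change cnt k (hist _ _ T) = _
    rw [ih]
    change np0 k A e.1 e.2 + cnt k H + _ = cnt k H + (np0 k A e.1 e.2 + _)
    omega

lemma okl_sound (H : List (ℕ × ℕ × ℕ)) (tb : Bool) (l : List (ℕ × ℕ)) (h : okl H tb l = true)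
    (hl : ∀ k ∈ l, cnt k.1 H = k.2) : tb = true := by
  induction l with
  | nil => exact h
  | cons k l ih =>
    change (Bool.rec (motive := fun _ => Bool) true (okl H tb l) (Nat.beq (cnt k.1 H) k.2) : Bool) = true at h
    have : Nat.beq (cnt k.1 H) k.2 = true := by
      rw [hl k (by simp)]; simp
    rw [this] at h
    exact ih h fun k hk => hl k (by simp [hk])

lemma edgeSet_add {V : Type*} (G : SimpleGraph V) {u w : V} (huw : u ≠ w) :
    (G ⊔ edge u w).edgeSet = insert s(u, w) G.edgeSet := by
  rw [edgeSet_sup, edgeSet_edge_of_ne huw, Set.union_comm]; rfl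

lemma gr_rep (T : List (ℕ × ℕ)) : ∀ (A : ℕ) (G : SimpleGraph ℕ), Rep A G → Val G T → Rep (bm A T) (gr G T) := by
  induction T with
  | nil => intro A G h _; exact h
  | cons e T ih =>
    intro A G h hv
    exact ih _ _ (h.addE hv.1.1 hv.1.2.1 hv.1.2.2.1) hv.2

lemma gr_cycs (n : ℕ) (T : List (ℕ × ℕ)) : ∀ (A : ℕ) (G : SimpleGraph ℕ), Rep A G → G.edgeSet.Finite → Val G T →
    (cycs (gr G T) n).ncard = (cycs G n).ncard + cntT (n + 3) A T := by
  induction T with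
  | nil => intro A G h _ _; rfl
  | cons e T ih =>
    intro A G h hf hv
    change (cycs (gr _ T) n).ncard = _ + (np0 (n + 3) A e.1 e.2 + cntT (n + 3) (addE A e.1 e.2) T)
    rw [ih _ _ (h.addE hv.1.1 hv.1.2.1 hv.1.2.2.1) _ hv.2,
      cycs_add G n e.1 e.2 hf hv.1.2.2.1 hv.1.2.2.2, np0_spec h]
    · omega
    · rw [edgeSet_add _ hv.1.2.2.1]; exact hf.insert _

lemma xsum_eq (T : List (ℕ × ℕ)) : ∀ (A : ℕ) (G : SimpleGraph ℕ), Rep A G → Val G T →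
    xsum A T = cntT 4 A T := by
  induction T with
  | nil => intro A G _ _; rfl
  | cons e T ih =>
    intro A G h hv
    change _ + _ = np0 (1 + 3) A e.1 e.2 + _
    rw [ih _ _ (h.addE hv.1.1 hv.1.2.1 hv.1.2.2.1) hv.2, np0_spec h,
      x3_spec h _ _ hv.1.1 hv.1.2.2.2]

lemma gr_adj (T : List (ℕ × ℕ)) : ∀ (G : SimpleGraph ℕ) (a b : ℕ), (gr G T).Adj a b ↔
    G.Adj a b ∨ a ≠ b ∧ ((a, b) ∈ T ∨ (b, a) ∈ T) := by
  induction T with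
  | nil => intro G a b; simp [gr]
  | cons e T ih =>
    intro G a b
    obtain ⟨u, w⟩ := e
    rw [gr, ih, sup_adj, edge_adj, List.mem_cons, List.mem_cons, Prod.mk.injEq, Prod.mk.injEq]
    tauto

lemma val_iff (T : List (ℕ × ℕ)) : ∀ (G : SimpleGraph ℕ), 
    (∀ e ∈ T, e.1 < 17 ∧ e.2 < 17 ∧ e.1 ≠ e.2 ∧ ¬ G.Adj e.1 e.2) →
    T.Pairwise (fun e e' => e ≠ e' ∧ e ≠ e'.swap) → Val G T := by
  induction T with
  | nil => intro G _ _; trivial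
  | cons e T ih =>
    intro G h hp
    rw [List.pairwise_cons] at hp
    refine ⟨h e (by simp), ih _ ?_ hp.2⟩
    intro e' he'
    obtain ⟨h1, h2, h3, h4⟩ := h e' (by simp [he'])
    refine ⟨h1, h2, h3, ?_⟩
    rw [sup_adj, edge_adj]
    obtain ⟨h5, h6⟩ := hp.1 e' he'
    rintro (h7 | h7)
    · exact h4 h7
    · rcases h7.1 with ⟨a, b⟩ | ⟨a, b⟩
      · exact h5 (Prod.ext a.symm b.symm)
      · exact h6 (Prod.ext b.symm a.symm)

lemma gr_append (T T' : List (ℕ × ℕ)) (G : SimpleGraph ℕ) : gr G (T ++ T') = gr (gr G T) T' := by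
  induction T generalizing G with
  | nil => rfl
  | cons e T ih => exact ih _
lemma bm_append (T T' : List (ℕ × ℕ)) (A : ℕ) : bm A (T ++ T') = bm (bm A T) T' := by
  induction T generalizing A with
  | nil => rfl
  | cons e T ih => exact ih _
lemma cntT_append (k : ℕ) (T T' : List (ℕ × ℕ)) (A : ℕ) :
    cntT k A (T ++ T') = cntT k A T + cntT k (bm A T) T' := by
  induction T generalizing A with
  | nil => simp [cntT, bm]
  | cons e T ih =>
    rw [List.cons_append, cntT, cntT, ih, Nat.add_assoc]; rfl

end
end OB

namespace OB
noncomputable section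
/-- the Hamiltonian-minus-one cycle together with the edge from the extra vertex `2 * m` to `0` -/
def base (m : ℕ) : List (ℕ × ℕ) :=
  ((List.range (2 * m)).map fun i => (i, (i + 1) % (2 * m))) ++ [(2 * m, 0)]
/-- candidate further edges -/
def LL : ℕ → List (ℕ × ℕ)
  | 2 => [(4, 2)]
  | 3 => [(6, 2), (6, 4), (0, 3), (2, 5), (4, 1)]
  | 4 => [(8, 2), (8, 4), (8, 6), (0, 3), (0, 5), (2, 5), (2, 7), (4, 1), (4, 7), (6, 1), (6, 3)]
  | 5 => [(10, 2), (10, 4), (10, 6), (10, 8), (0, 3), (0, 5), (0, 7), (2, 5), (2, 7), (2, 9), (4, 1), (4, 7), (4, 9), (6, 1), (6, 3), (6, 9), (8, 1), (8, 3), (8, 5)]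
  | 6 => [(12, 2), (12, 4), (12, 6), (12, 8), (12, 10), (0, 3), (0, 5), (0, 7), (0, 9), (2, 5), (2, 7), (2, 9), (2, 11), (4, 1), (4, 7), (4, 9), (4, 11), (6, 1), (6, 3), (6, 9), (6, 11), (8, 1), (8, 3), (8, 5), (8, 11), (10, 1), (10, 3), (10, 5), (10, 7)]
  | 7 => [(14, 2), (14, 4), (14, 6), (14, 8), (14, 10), (14, 12), (0, 3), (0, 5), (0, 7), (0, 9), (0, 11), (2, 5), (2, 7), (2, 9), (2, 11), (2, 13), (4, 1), (4, 7), (4, 9), (4, 11), (4, 13), (6, 1), (6, 3), (6, 9), (6, 11), (6, 13), (8, 1), (8, 3), (8, 5), (8, 11), (8, 13), (10, 1), (10, 3), (10, 5), (10, 7), (10, 13), (12, 1), (12, 3), (12, 5), (12, 7), (12, 9)]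
  | 8 => [(16, 2), (16, 4), (16, 6), (16, 8), (16, 10), (16, 12), (16, 14), (0, 3), (0, 5), (0, 7), (0, 9), (0, 11), (0, 13), (2, 5), (2, 7), (2, 9), (2, 11), (2, 13), (2, 15), (4, 1), (4, 7), (4, 9), (4, 11), (4, 13), (4, 15), (6, 1), (6, 3), (6, 9), (6, 11), (6, 13), (6, 15), (8, 1), (8, 3), (8, 5), (8, 11), (8, 13), (8, 15), (10, 1), (10, 3), (10, 5), (10, 7), (10, 13), (10, 15), (12, 1), (12, 3), (12, 5), (12, 7), (12, 9), (12, 15), (14, 1), (14, 3), (14, 5), (14, 7), (14, 9), (14, 11)]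
  | _ => []
def KL : ℕ → List (ℕ × ℕ)
  | 2 => []
  | 3 => [(6, 3)]
  | 4 => [(6, 4), (8, 3)]
  | 5 => [(6, 4), (8, 4), (10, 3)]
  | 6 => [(6, 4), (8, 4), (10, 4), (12, 3)]
  | 7 => [(6, 4), (8, 4), (10, 4), (12, 4), (14, 3)]
  | 8 => [(6, 4), (8, 4), (10, 4), (12, 4), (14, 4), (16, 3)]
  | _ => []
def N0 : ℕ → ℕ
  | 2 => 3
  | _ => 4
/-- extra edges of the surviving graphs -/
def TAB : ℕ → List (List (ℕ × ℕ))
  | 4 => [[(8, 2), (0, 5), (4, 7)],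
    [(8, 2), (2, 5), (6, 3)],
    [(8, 2), (4, 7), (6, 3)]]
  | 6 => [[(12, 2), (0, 7), (0, 9), (6, 11)],
    [(12, 2), (0, 7), (6, 9), (6, 11)],
    [(12, 2), (2, 5), (2, 7), (8, 3)],
    [(12, 2), (2, 7), (8, 3), (8, 5)],
    [(12, 2), (4, 7), (4, 9), (10, 5)],
    [(12, 2), (4, 9), (6, 3), (8, 3)],
    [(12, 2), (4, 9), (6, 9), (8, 3)],
    [(12, 2), (4, 9), (10, 5), (10, 7)],
    [(12, 2), (6, 11), (8, 5), (10, 5)],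
    [(12, 2), (6, 11), (8, 11), (10, 5)]]
  | _ => []
def finm (m A : ℕ) (H : List (ℕ × ℕ × ℕ)) : Bool :=
  okl H ((TAB m).any fun S => Nat.beq (bm 0 (base m ++ S)) A) (KL m)
def top (m t : ℕ) : Bool :=
  force (Nat.mul 2 m) fun x => force (Nat.mul 2 t) fun s => force (bm 0 (base m)) fun A0 =>
    strip (N0 m) (x3 A0 x s) fun need' => force (addE A0 x s) fun A' =>
      band (Nat.rec (motive := fun _ => Bool) (finm m A' [(A0, x, s)]) (fun _ _ => true) need')
        (srch (finm m) ((LL m).drop t) 3 A' [(A0, x, s)] need')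

end
end OB

namespace OB
section
set_option maxRecDepth 100000
theorem top_2_1 : top 2 1 = true := by decide +kernel
theorem top_3_1 : top 3 1 = true := by decide +kernel
theorem top_4_1 : top 4 1 = true := by decide +kernel
theorem top_4_2 : top 4 2 = true := by decide +kernel
theorem top_5_1 : top 5 1 = true := by decide +kernel
theorem top_5_2 : top 5 2 = true := by decide +kernel
theorem top_6_1 : top 6 1 = true := by decide +kernel
theorem top_6_2 : top 6 2 = true := by decide +kernel
theorem top_6_3 : top 6 3 = true := by decide +kernel
theorem top_7_1 : top 7 1 = true := by decide +kernel
theorem top_7_2 : top 7 2 = true := by decide +kernel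
theorem top_7_3 : top 7 3 = true := by decide +kernel
theorem top_8_1 : top 8 1 = true := by decide +kernel
theorem top_8_2 : top 8 2 = true := by decide +kernel
theorem top_8_3 : top 8 3 = true := by decide +kernel
theorem top_8_4 : top 8 4 = true := by decide +kernel
end
end OB

namespace OB

lemma bm_hist_top {m t : ℕ} (h : top m t = true) {T : List (ℕ × ℕ)}
    (hT : T.Sublist ((LL m).drop t)) (hlen : T.length ≤ 3)
    (hx : xsum (bm 0 (base m)) ((2 * m, 2 * t) :: T) = N0 m) :
    finm m (bm (bm 0 (base m)) ((2 * m, 2 * t) :: T)) (hist [] (bm 0 (base m)) ((2 * m, 2 * t) :: T)) = true := by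
  change force (2 * m) _ = true at h
  rw [force_eq] at h
  change force (2 * t) _ = true at h
  rw [force_eq, force_eq, strip_eq] at h
  change (bits (x3 (bm 0 (base m)) (2 * m) (2 * t))).card + xsum (addE (bm 0 (base m)) (2 * m) (2 * t)) T = N0 m at hx
  rw [if_pos (by omega), force_eq, band_eq, Bool.and_eq_true] at h
  have e : N0 m - (bits (x3 (bm 0 (base m)) (2 * m) (2 * t))).card = xsum (addE (bm 0 (base m)) (2 * m) (2 * t)) T := by
    omega
  rw [e] at h
  by_cases hT0 : T = []
  · subst hT0
    exact h.1
  · change finm m (bm (addE (bm 0 (base m)) (2 * m) (2 * t)) T) (hist [(bm 0 (base m), 2 * m, 2 * t)] (addE (bm 0 (base m)) (2 * m) (2 * t)) T) = true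
    exact srch_sound _ _ _ _ _ _ _ h.2 hT hT0 hlen rfl

structure MOK (m : ℕ) : Prop where
  len : (base m).length = 2 * m + 1
  bnd : ∀ e ∈ base m ++ LL m, e.1 < 17 ∧ e.2 < 17 ∧ e.1 ≠ e.2
  nd : (base m ++ LL m).Pairwise (fun e e' => e ≠ e' ∧ e ≠ e'.swap)
  xe : ∀ s < m, ∀ t < s, (2 * m, 2 * s) ∈ (LL m).drop t
  drp : ∀ t, t + 1 < m → (LL m).drop t = (2 * m, 2 * (t + 1)) :: (LL m).drop (t + 1)
  ch : ∀ i < m, ∀ j < m, j = i ∨ (2 * j + 2) % (2 * m) = 2 * i ∨ (2 * i, 2 * j + 1) ∈ (LL m).drop (m - 1)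
  kl : ∀ k ∈ KL m, k.1 % 2 = 0 ∧ 4 ≤ k.1 ∧ k.1 ≤ 2 * m ∧ cntT k.1 0 (base m) + k.2 = 4
  n0 : cntT 4 0 (base m) + N0 m = 4
  tb : ∀ S ∈ TAB m, (∀ e ∈ S, e.1 < 17 ∧ e.2 < 17 ∧ e.1 ≠ e.2) ∧
    (base m ++ S).Pairwise (fun e e' => e ≠ e' ∧ e ≠ e'.swap)

set_option maxRecDepth 100000 in
lemma mok (m : ℕ) (h2 : 2 ≤ m) (h8 : m ≤ 8) : MOK m := by
  have drp : ∀ t < m - 1, (LL m).drop t = (2 * m, 2 * (t + 1)) :: (LL m).drop (t + 1) := by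
    interval_cases m <;> decide +kernel
  refine ⟨?_, ?_, ?_, ?_, fun t ht => drp t (by omega), ?_, ?_, ?_, ?_⟩
  all_goals clear drp; interval_cases m <;> decide +kernel

lemma top_all (m t : ℕ) (h2 : 2 ≤ m) (h8 : m ≤ 8) (ht : 1 ≤ t) (htm : 2 * t ≤ m) : top m t = true := by
  interval_cases m
  · obtain rfl : t = 1 := by omega
    exact top_2_1
  · obtain rfl : t = 1 := by omega
    exact top_3_1
  · obtain rfl | rfl : t = 1 ∨ t = 2 := by omega
    exacts [top_4_1, top_4_2]
  · obtain rfl | rfl : t = 1 ∨ t = 2 := by omega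
    exacts [top_5_1, top_5_2]
  · obtain rfl | rfl | rfl : t = 1 ∨ t = 2 ∨ t = 3 := by omega
    exacts [top_6_1, top_6_2, top_6_3]
  · obtain rfl | rfl | rfl : t = 1 ∨ t = 2 ∨ t = 3 := by omega
    exacts [top_7_1, top_7_2, top_7_3]
  · obtain rfl | rfl | rfl | rfl : t = 1 ∨ t = 2 ∨ t = 3 ∨ t = 4 := by omega
    exacts [top_8_1, top_8_2, top_8_3, top_8_4]

/-- normalised graphs: a `2 * m`-cycle `0, …, 2 * m - 1` and an extra vertex `2 * m` adjacent to `0` -/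
structure Hyp (m t : ℕ) (Γ : SimpleGraph ℕ) : Prop where
  bd : ∀ a b, Γ.Adj a b → b ≤ 2 * m
  cyc : ∀ i < 2 * m, Γ.Adj i ((i + 1) % (2 * m))
  x0 : Γ.Adj (2 * m) 0
  xt : Γ.Adj (2 * m) (2 * t)
  x : ∀ a, Γ.Adj (2 * m) a → a % 2 = 0 ∧ (a = 0 ∨ 2 * t ≤ a)
  par : ∀ a b, a < 2 * m → b < 2 * m → Γ.Adj a b → a % 2 ≠ b % 2
  edg : Γ.edgeSet.ncard ≤ 2 * m + 5
  cnt : ∀ n, n % 2 = 1 → n + 3 ≤ 2 * m → (cycs Γ n).ncard = 4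

lemma gr_ncard (T : List (ℕ × ℕ)) : ∀ G : SimpleGraph ℕ, G.edgeSet.Finite → Val G T →
    (gr G T).edgeSet.ncard = G.edgeSet.ncard + T.length := by
  induction T with
  | nil => intro G _ _; rfl
  | cons e T ih =>
    intro G hf hv
    rw [gr, ih _ _ hv.2, edgeSet_add _ hv.1.2.2.1, Set.ncard_insert_of_notMem _ hf, List.length_cons]
    · omega
    · rw [mem_edgeSet]; exact hv.1.2.2.2
    · rw [edgeSet_add _ hv.1.2.2.1]; exact hf.insert _

lemma mem_base {m : ℕ} {e : ℕ × ℕ} : e ∈ base m ↔ (e.1 < 2 * m ∧ e.2 = (e.1 + 1) % (2 * m)) ∨ e = (2 * m, 0) := by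
  simp only [base, List.mem_append, List.mem_map, List.mem_range, List.mem_singleton]
  refine or_congr ?_ Iff.rfl
  constructor
  · rintro ⟨i, hi, rfl⟩; exact ⟨hi, rfl⟩
  · rintro ⟨h1, h2⟩; exact ⟨e.1, h1, Prod.ext rfl h2.symm⟩

lemma classify {m t : ℕ} {Γ : SimpleGraph ℕ} (h : Hyp m t Γ) (h2 : 2 ≤ m) (h8 : m ≤ 8)
    (ht : 1 ≤ t) (htm : 2 * t ≤ m) : ∃ S ∈ TAB m, Γ = gr ⊥ (base m ++ S) := by
  classical
  have ok := mok m h2 h8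
  set T := ((LL m).drop t).filter fun e => decide (Γ.Adj e.1 e.2) with hT
  have hsub : T.Sublist ((LL m).drop t) := List.filter_sublist
  have hdrop : (LL m).drop (t - 1) = (2 * m, 2 * t) :: (LL m).drop t := by
    have := ok.drp (t - 1) (by omega)
    rwa [Nat.sub_add_cancel ht] at this
  have hsub2 : (base m ++ (2 * m, 2 * t) :: T).Sublist (base m ++ LL m) := by
    apply List.Sublist.append (List.Sublist.refl _)
    have h1 : ((2 * m, 2 * t) :: T).Sublist ((LL m).drop (t - 1)) := by
      rw [hdrop]; exact hsub.cons_cons _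
    exact h1.trans (List.drop_sublist _ _)
  have hval : Val ⊥ (base m ++ (2 * m, 2 * t) :: T) := by
    apply val_iff
    · intro e he
      obtain ⟨a, b, c⟩ := ok.bnd e (hsub2.subset he)
      exact ⟨a, b, c, by simp⟩
    · exact ok.nd.sublist hsub2
  have hchord : ∀ i j, i < 2 * m → j < 2 * m → i % 2 = 0 → Γ.Adj i j →
      (i, j) ∈ base m ++ (2 * m, 2 * t) :: T ∨ (j, i) ∈ base m ++ (2 * m, 2 * t) :: T := by
    intro i j hi hj hi0 hadj
    have hp := h.par i j hi hj hadj
    have := ok.ch (i / 2) (by omega) (j / 2) (by omega)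
    rw [show 2 * (i / 2) = i by omega, show 2 * (j / 2) + 1 = j by omega,
      show 2 * (j / 2) + 2 = j + 1 by omega] at this
    rcases this with h1 | h1 | h1
    · left
      refine List.mem_append_left _ (mem_base.2 (Or.inl ⟨hi, ?_⟩))
      change j = (i + 1) % (2 * m)
      rw [Nat.mod_eq_of_lt (by omega)]; omega
    · right
      exact List.mem_append_left _ (mem_base.2 (Or.inl ⟨hj, h1.symm⟩))
    · left
      refine List.mem_append_right _ (List.mem_cons_of_mem _ ?_)
      rw [hT, List.mem_filter]
      refine ⟨?_, by simpa using hadj⟩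
      have hd : (LL m).drop (m - 1) = ((LL m).drop t).drop (m - 1 - t) := by
        rw [List.drop_drop]; congr 1; omega
      rw [hd] at h1
      exact List.mem_of_mem_drop h1
  have hxx : ∀ a, Γ.Adj (2 * m) a → (2 * m, a) ∈ base m ++ (2 * m, 2 * t) :: T := by
    intro a ha
    obtain ⟨h1, h3⟩ := h.x a ha
    have h4 := h.bd _ _ ha
    have h5 := ha.ne
    rcases h3 with rfl | h3
    · exact List.mem_append_left _ (mem_base.2 (Or.inr rfl))
    · apply List.mem_append_right
      rcases h3.eq_or_lt with rfl | h3
      · simp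
      · refine List.mem_cons_of_mem _ ?_
        rw [hT, List.mem_filter]
        refine ⟨?_, by simpa using ha⟩
        have := ok.xe (a / 2) (by omega) t (by omega)
        rwa [show 2 * (a / 2) = a by omega] at this
  have hG : Γ = gr ⊥ (base m ++ (2 * m, 2 * t) :: T) := by
    ext a b
    rw [gr_adj, bot_adj, false_or]
    constructor
    · intro hab
      refine ⟨hab.ne, ?_⟩
      have ha := h.bd _ _ hab.symm
      have hb := h.bd _ _ hab
      have hne := hab.ne
      rcases ha.eq_or_lt with rfl | ha'
      · exact Or.inl (hxx _ hab)
      rcases hb.eq_or_lt with rfl | hb'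
      · exact Or.inr (hxx _ hab.symm)
      have hp := h.par _ _ ha' hb' hab
      rcases Nat.mod_two_eq_zero_or_one a with h0 | h0
      · exact hchord a b ha' hb' h0 hab
      · exact (hchord b a hb' ha' (by omega) hab.symm).symm
    · have key : ∀ e ∈ base m ++ (2 * m, 2 * t) :: T, Γ.Adj e.1 e.2 := by
        intro e he
        rcases List.mem_append.1 he with he | he
        · rcases mem_base.1 he with ⟨h1, h2⟩ | rfl
          · rw [h2]; exact h.cyc _ h1
          · exact h.x0
        · rcases List.mem_cons.1 he with rfl | he
          · exact h.xt
          · rw [hT, List.mem_filter] at he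
            simpa using he.2
      rintro ⟨_, h1 | h1⟩
      · exact key _ h1
      · exact (key _ h1).symm
  have hfin0 : (⊥ : SimpleGraph ℕ).edgeSet.Finite := by simp
  have hlen : T.length ≤ 3 := by
    have h1 := gr_ncard _ _ hfin0 hval
    rw [← hG] at h1
    have := h.edg
    simp [ok.len] at h1
    omega
  have hcnt : ∀ n, n % 2 = 1 → n + 3 ≤ 2 * m →
      cntT (n + 3) 0 (base m) + cntT (n + 3) (bm 0 (base m)) ((2 * m, 2 * t) :: T) = 4 := by
    intro n h1 h3
    have e1 := gr_cycs n _ 0 ⊥ Rep.zero hfin0 hval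
    rw [← hG, h.cnt n h1 h3, cntT_append] at e1
    have e0 : (cycs (⊥ : SimpleGraph ℕ) n).ncard = 0 := by
      rw [Set.ncard_eq_zero (cycs_finite _ _ hfin0), Set.eq_empty_iff_forall_notMem]
      rintro E ⟨⟨f, hf, rfl⟩, hE⟩
      have := hE ⟨0, rfl⟩
      simp at this
    omega
  have hvalsplit : ∀ (T1 T2 : List (ℕ × ℕ)) (G : SimpleGraph ℕ), Val G (T1 ++ T2) → Val G T1 ∧ Val (gr G T1) T2 := by
    intro T1
    induction T1 with
    | nil => intro T2 G hh; exact ⟨trivial, hh⟩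
    | cons e T1 ih => intro T2 G hh; exact ⟨⟨hh.1, (ih _ _ hh.2).1⟩, (ih _ _ hh.2).2⟩
  obtain ⟨hv1, hv2⟩ := hvalsplit _ _ _ hval
  have hrep := gr_rep _ _ _ Rep.zero hv1
  have hx : xsum (bm 0 (base m)) ((2 * m, 2 * t) :: T) = N0 m := by
    rw [xsum_eq _ _ _ hrep hv2]
    have := hcnt 1 rfl (by omega)
    rw [show 1 + 3 = 4 from rfl] at this
    have := ok.n0
    omega
  have hfin := bm_hist_top (top_all m t h2 h8 ht htm) hsub hlen hx
  have htab := okl_sound _ _ _ hfin (by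
    intro k hk
    obtain ⟨a, b, c, d⟩ := ok.kl k hk
    rw [cnt_hist]
    change 0 + _ = _
    have := hcnt (k.1 - 3) (by omega) (by omega)
    rw [show k.1 - 3 + 3 = k.1 by omega] at this
    omega)
  rw [List.any_eq_true] at htab
  obtain ⟨S, hS, hb⟩ := htab
  refine ⟨S, hS, ?_⟩
  have hbm := Nat.eq_of_beq_eq_true hb
  obtain ⟨hS1, hS2⟩ := ok.tb S hS
  have hvalS : Val ⊥ (base m ++ S) := by
    apply val_iff _ _ _ hS2
    intro e he
    have : e.1 < 17 ∧ e.2 < 17 ∧ e.1 ≠ e.2 := by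
      rcases List.mem_append.1 he with he | he
      · exact ok.bnd e (List.mem_append_left _ he)
      · exact hS1 e he
    exact ⟨this.1, this.2.1, this.2.2, by simp⟩
  have hr1 := gr_rep _ _ _ Rep.zero hvalS
  have hr2 := gr_rep _ _ _ Rep.zero hval
  rw [hbm, ← bm_append] at hr1
  rw [hG]
  exact hr2.unique hr1

end OB

namespace OB

lemma fin_two_ne (n : ℕ) (j : Fin (n + 3)) : j + 1 + 1 ≠ j := by
  intro h
  have h1 : (1 + 1 : Fin (n + 3)) = 0 := by
    have : j + (1 + 1) = j + 0 := by rw [← add_assoc, h, add_zero]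
    exact add_left_cancel this
  have := congrArg Fin.val h1
  rw [Fin.val_add] at this
  simp at this
  rw [Nat.mod_eq_of_lt (by omega)] at this
  omega

lemma cyc_edge_inj {V : Type*} {n : ℕ} {f : Fin (n + 3) → V} (hf : Function.Injective f) :
    Function.Injective fun i : Fin (n + 3) => s(f i, f (i + 1)) := by
  intro i j h
  simp only [Sym2.eq_iff] at h
  rcases h with ⟨h, _⟩ | ⟨h1, h2⟩
  · exact hf h
  · exfalso
    have h1 := hf h1
    have h2 := hf h2
    rw [h1] at h2
    exact fin_two_ne n j h2

lemma IsCyc.ncard {V : Type*} {n : ℕ} {E : Set (Sym2 V)} (h : IsCyc n E) : E.ncard = n + 3 := by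
  obtain ⟨f, hf, rfl⟩ := h
  rw [← Set.image_univ, Set.ncard_image_of_injective _ (cyc_edge_inj hf), Set.ncard_univ]
  simp

lemma IsCyc.even {V : Type*} {n : ℕ} {E : Set (Sym2 V)} (h : IsCyc n E) (v : V) :
    Even {e ∈ E | v ∈ e}.ncard := by
  obtain ⟨f, hf, rfl⟩ := h
  by_cases hv : ∃ j, f (j + 1) = v
  · obtain ⟨j, rfl⟩ := hv
    have : {e ∈ Set.range fun i : Fin (n + 3) => s(f i, f (i + 1)) | f (j + 1) ∈ e} =
        {s(f j, f (j + 1)), s(f (j + 1), f (j + 1 + 1))} := by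
      ext e
      constructor
      · rintro ⟨⟨i, rfl⟩, hi⟩
        rcases Sym2.mem_iff.1 hi with hi | hi
        · right; have := hf hi; subst this; rfl
        · left; have := add_right_cancel (hf hi); subst this; rfl
      · rintro (rfl | rfl)
        · exact ⟨⟨j, rfl⟩, by simp⟩
        · exact ⟨⟨j + 1, rfl⟩, by simp⟩
    rw [this, Set.ncard_pair]
    · exact even_two
    · intro h
      have := cyc_edge_inj hf h
      have h3 := fin_two_ne n j
      apply h3
      rw [← this, ← this]
  · have : {e ∈ Set.range fun i : Fin (n + 3) => s(f i, f (i + 1)) | v ∈ e} = ∅ := by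
      rw [Set.eq_empty_iff_forall_notMem]
      rintro e ⟨⟨i, rfl⟩, hi⟩
      apply hv
      rcases Sym2.mem_iff.1 hi with hi | hi
      · exact ⟨i - 1, by rw [hi]; congr 1; abel⟩
      · exact ⟨i, hi.symm⟩
    rw [this]; simp

lemma parity_step {V : Type*} {E F : Set (Sym2 V)} (hE : E.Finite) (hF : F.Finite) (v : V)
    (h1 : Even {e ∈ E | v ∈ e}.ncard) (h2 : Even {e ∈ F | v ∈ e}.ncard) (e0 : Sym2 V)
    (hv : v ∈ e0) (h : ∀ e, v ∈ e → e ≠ e0 → (e ∈ E ↔ e ∈ F)) : e0 ∈ E ↔ e0 ∈ F := by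
  have key : ∀ {E F : Set (Sym2 V)}, E.Finite → F.Finite → Even {e ∈ E | v ∈ e}.ncard →
      Even {e ∈ F | v ∈ e}.ncard → (∀ e, v ∈ e → e ≠ e0 → (e ∈ E ↔ e ∈ F)) → e0 ∈ E → e0 ∈ F := by
    intro E F hE hF h1 h2 h he
    by_contra hne
    have : {e ∈ E | v ∈ e} = insert e0 {e ∈ F | v ∈ e} := by
      ext e
      by_cases hee : e = e0
      · subst hee; simp [he, hv]
      · constructor
        · rintro ⟨a, b⟩; exact Or.inr ⟨(h e b hee).1 a, b⟩
        · rintro (a | ⟨a, b⟩)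
          · exact absurd a hee
          · exact ⟨(h e b hee).2 a, b⟩
    rw [this, Set.ncard_insert_of_notMem (fun hh => hne hh.1) (hF.subset (Set.sep_subset _ _))] at h1
    exact (Nat.even_add_one.1 h1) h2
  exact ⟨key hE hF h1 h2 h, key hF hE h2 h1 fun e a b => (h e a b).symm⟩

/-- a spanning tree of a normalised graph -/
def Tr (m : ℕ) : Set (Sym2 ℕ) := insert s(2 * m, 0) ((fun i => s(i, i + 1)) '' {i | i + 1 < 2 * m})

lemma tr_ncard (m : ℕ) (hm : 2 ≤ m) : (Tr m).ncard = 2 * m := by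
  have hs : {i | i + 1 < 2 * m} = ((Finset.range (2 * m - 1) : Finset ℕ) : Set ℕ) := by
    ext i; simp; omega
  have hfin : ((fun i => s(i, i + 1)) '' {i | i + 1 < 2 * m}).Finite := by
    rw [hs]; exact (Finset.finite_toSet _).image _
  rw [Tr, Set.ncard_insert_of_notMem _ hfin, Set.ncard_image_of_injective, hs, Set.ncard_coe_finset,
    Finset.card_range]
  · omega
  · intro i j h
    simp only [Sym2.eq_iff] at h
    omega
  · rintro ⟨i, hi, h⟩
    simp only [Sym2.eq_iff] at h
    change i + 1 < 2 * m at hi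
    omega

lemma Hyp.finite {m t : ℕ} {Γ : SimpleGraph ℕ} (h : Hyp m t Γ) : Γ.edgeSet.Finite := by
  have : Γ.edgeSet ⊆ (fun p : ℕ × ℕ => s(p.1, p.2)) '' (Set.Iic (2 * m) ×ˢ Set.Iic (2 * m)) := by
    intro e
    induction e using Sym2.ind with
    | _ a b =>
      intro hab
      exact ⟨(a, b), ⟨h.bd _ _ (SimpleGraph.Adj.symm hab), h.bd _ _ hab⟩, rfl⟩
  exact (((Set.finite_Iic _).prod (Set.finite_Iic _)).image _).subset this

lemma tr_inj {m : ℕ} {Γ : SimpleGraph ℕ} (hfin : Γ.edgeSet.Finite) {E F : Set (Sym2 ℕ)}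
    (hE : E ⊆ Γ.edgeSet) (hF : F ⊆ Γ.edgeSet) (hE2 : ∀ v, Even {e ∈ E | v ∈ e}.ncard)
    (hF2 : ∀ v, Even {e ∈ F | v ∈ e}.ncard)
    (h : ∀ e, e ∉ Tr m → (e ∈ E ↔ e ∈ F)) : E = F := by
  have hx : s(2 * m, 0) ∈ E ↔ s(2 * m, 0) ∈ F := by
    refine parity_step (hfin.subset hE) (hfin.subset hF) (2 * m) (hE2 _) (hF2 _) _ (by simp) ?_
    intro e he hne
    apply h
    rintro (rfl | ⟨i, hi, rfl⟩)
    · exact hne rfl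
    · change i + 1 < 2 * m at hi
      rcases Sym2.mem_iff.1 he with hh | hh <;> omega
  have hp : ∀ k i, i + 1 + k = 2 * m - 1 → (s(i, i + 1) ∈ E ↔ s(i, i + 1) ∈ F) := by
    intro k
    induction k with
    | zero =>
      intro i hi
      refine parity_step (hfin.subset hE) (hfin.subset hF) (i + 1) (hE2 _) (hF2 _) _ (by simp) ?_
      intro e he hne
      apply h
      rintro (rfl | ⟨j, hj, rfl⟩)
      · rcases Sym2.mem_iff.1 he with hh | hh <;> omega
      · change j + 1 < 2 * m at hj
        rcases Sym2.mem_iff.1 he with hh | hh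
        · omega
        · obtain rfl : i = j := by omega
          exact hne rfl
    | succ k ih =>
      intro i hi
      refine parity_step (hfin.subset hE) (hfin.subset hF) (i + 1) (hE2 _) (hF2 _) _ (by simp) ?_
      intro e he hne
      by_cases hee : e = s(i + 1, i + 1 + 1)
      · rw [hee]; exact ih (i + 1) (by omega)
      apply h
      rintro (rfl | ⟨j, hj, rfl⟩)
      · rcases Sym2.mem_iff.1 he with hh | hh <;> omega
      · change j + 1 < 2 * m at hj
        rcases Sym2.mem_iff.1 he with hh | hh
        · obtain rfl : i + 1 = j := by omega
          exact hee rfl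
        · obtain rfl : i = j := by omega
          exact hne rfl
  ext e
  by_cases he : e ∈ Tr m
  · rcases he with rfl | ⟨i, hi, rfl⟩
    · exact hx
    · change i + 1 < 2 * m at hi
      exact hp (2 * m - 1 - (i + 1)) i (by omega)
  · exact h e he

lemma bound {m t : ℕ} {Γ : SimpleGraph ℕ} (h : Hyp m t Γ) (hm : 2 ≤ m) : m ≤ 8 := by
  classical
  have hfin := h.finite
  have htr : Tr m ⊆ Γ.edgeSet := by
    rintro _ (rfl | ⟨i, hi, rfl⟩)
    · exact h.x0
    · change i + 1 < 2 * m at hi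
      have := h.cyc i (by omega)
      rw [Nat.mod_eq_of_lt hi] at this
      exact this
  set N := Γ.edgeSet \ Tr m with hN
  have hNc : N.ncard ≤ 5 := by
    rw [hN, Set.ncard_sdiff htr (hfin.subset htr), tr_ncard m hm]
    have := h.edg
    omega
  have hNf : N.Finite := hfin.subset Set.sdiff_subset
  have heq : ∀ j : Fin (m - 1), Nonempty (Fin 4 ≃ cycs Γ (2 * j.1 + 1)) := by
    intro j
    have hc := h.cnt (2 * j.1 + 1) (by omega) (by have := j.2; omega)
    have : Finite (cycs Γ (2 * j.1 + 1)) := (cycs_finite _ _ hfin).to_subtype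
    rw [← Nat.card_coe_set_eq] at hc
    exact ⟨(Finite.equivFinOfCardEq hc).symm⟩
  let eqv := fun j => (heq j).some
  let Φ : Option (Fin (m - 1) × Fin 4) → Set (Sym2 ℕ) := fun o =>
    match o with
    | none => ∅
    | some p => (eqv p.1 p.2).1
  have hsub : ∀ o, Φ o ⊆ Γ.edgeSet := by
    rintro (_ | p)
    · exact Set.empty_subset _
    · exact (eqv p.1 p.2).2.2
  have heven : ∀ o v, Even {e ∈ Φ o | v ∈ e}.ncard := by
    rintro (_ | p) v
    · simp [Φ]
    · exact (eqv p.1 p.2).2.1.even v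
  have hnc : ∀ p, (Φ (some p)).ncard = 2 * p.1.1 + 1 + 3 := fun p => (eqv p.1 p.2).2.1.ncard
  have hinj : Function.Injective Φ := by
    rintro (_ | ⟨j, a⟩) (_ | ⟨j', a'⟩) hh
    · rfl
    · have := hnc (j', a'); rw [← hh] at this; simp [Φ] at this
    · have := hnc (j, a); rw [hh] at this; simp [Φ] at this
    · have h1 := hnc (j, a)
      have h2 := hnc (j', a')
      rw [hh, h2] at h1
      simp only at h1
      obtain rfl : j = j' := Fin.ext (by omega)
      have h3 : eqv j a = eqv j a' := Subtype.ext hh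
      rw [(eqv j).injective h3]
  have hinj2 : Function.Injective fun o => ({x : N | x.1 ∈ Φ o} : Set N) := by
    intro o o' hh
    apply hinj
    refine tr_inj (m := m) hfin (hsub o) (hsub o') (heven o) (heven o') ?_
    intro e he
    by_cases heΓ : e ∈ Γ.edgeSet
    · have := Set.ext_iff.1 hh ⟨e, heΓ, he⟩
      exact this
    · exact ⟨fun hx => absurd (hsub _ hx) heΓ, fun hx => absurd (hsub _ hx) heΓ⟩
  have : Fintype N := hNf.fintype
  have hcard := Fintype.card_le_of_injective _ hinj2
  rw [Fintype.card_set, Fintype.card_option, Fintype.card_prod, Fintype.card_fin, Fintype.card_fin] at hcard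
  have hN5 : Fintype.card N ≤ 5 := by
    rw [← Nat.card_eq_fintype_card, Nat.card_coe_set_eq]; exact hNc
  have := Nat.pow_le_pow_right (n := 2) (by norm_num) hN5
  omega

end OB

namespace OB

lemma extract {V : Type} [Fintype V] (G : SimpleGraph V) (m : ℕ) (hm : 2 ≤ m)
    (hcard : Fintype.card V = 2 * m + 1) (hG : IsOddlyRBipancyclic G 4)
    (hedge : G.edgeSet.ncard ≤ 2 * m + 5) :
    ∃ (t : ℕ) (Γ : SimpleGraph ℕ), 1 ≤ t ∧ 2 * t ≤ m ∧ Hyp m t Γ ∧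
      Nonempty (G ≃g (Γ.comap (Fin.val : Fin (2 * m + 1) → ℕ))) := by
  classical
  obtain ⟨⟨c⟩, -, hdeg, hcnt⟩ := hG
  obtain ⟨n, hn⟩ : ∃ n, n + 3 = 2 * m := ⟨2 * m - 3, by omega⟩
  have h4 := hcnt (n + 3) (by omega) (by omega) (by rw [hn]; exact even_two_mul m)
  rw [cycleCount_eq] at h4
  obtain ⟨E, ⟨f, hf, rfl⟩, hE⟩ := Set.nonempty_of_ncard_ne_zero (by rw [h4]; norm_num)
  -- periodic parametrisation of the cycle
  have hpos : 0 < n + 3 := by omega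
  let F : ℕ → V := fun k => f ⟨k % (n + 3), Nat.mod_lt _ hpos⟩
  have hFadj : ∀ k, G.Adj (F k) (F (k + 1)) := by
    intro k
    have h1 := hE ⟨⟨k % (n + 3), Nat.mod_lt _ hpos⟩, rfl⟩
    have h2 : (⟨k % (n + 3), Nat.mod_lt _ hpos⟩ : Fin (n + 3)) + 1 =
        ⟨(k + 1) % (n + 3), Nat.mod_lt _ hpos⟩ := by
      apply Fin.ext
      simp [Fin.val_add]
    rw [mem_edgeSet, h2] at h1
    exact h1
  have hFeq : ∀ a b, F a = F b ↔ a % (2 * m) = b % (2 * m) := by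
    intro a b
    rw [← hn]
    constructor
    · intro h
      have := hf h
      exact congrArg Fin.val this
    · intro h
      change f _ = f _
      simp only [h]
  obtain ⟨x, hx⟩ : ∃ x, x ∉ Set.range f := by
    by_contra hcon
    push Not at hcon
    have := Fintype.card_le_of_surjective f hcon
    rw [hcard, Fintype.card_fin] at this
    omega
  have hxF : ∀ k, F k ≠ x := fun k h => hx ⟨_, h⟩
  -- colours
  have hcol : ∀ k, c (F k) = c (F 0) ↔ k % 2 = 0 := by
    intro k
    induction k with
    | zero => simp
    | succ k ih =>
      have h1 := c.valid (hFadj k)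
      rw [Fin.ext_iff] at ih ⊢
      rw [Ne, Fin.ext_iff] at h1
      have h2 := (c (F k)).2
      have h3 := (c (F (k + 1))).2
      have h5 := (c (F 0)).2
      omega
  have hcol2 : ∀ a b, c (F a) = c (F b) ↔ a % 2 = b % 2 := by
    intro a b
    have h1 := hcol a
    have h2 := hcol b
    rw [Fin.ext_iff] at h1 h2 ⊢
    have h3 := (c (F a)).2
    have h4 := (c (F b)).2
    have h5 := (c (F 0)).2
    omega
  have hxcol : ∀ a b, G.Adj x (F a) → G.Adj x (F b) → a % 2 = b % 2 := by
    intro a b h1 h2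
    rw [← hcol2]
    have h1 := c.valid h1
    have h2 := c.valid h2
    rw [Ne, Fin.ext_iff] at h1 h2
    rw [Fin.ext_iff]
    have h3 := (c (F a)).2
    have h4 := (c (F b)).2
    have h5 := (c x).2
    omega
  have hg0inj : ∀ i, Function.Injective (fun k : Fin (2 * m + 1) => if k.1 < 2 * m then F (i + k.1) else x) := by
    intro i a b hab
    simp only at hab
    split_ifs at hab with h1 h2 h2
    · rw [hFeq] at hab
      have h3 : (i + a.1) ≡ (i + b.1) [MOD 2 * m] := hab
      have h4 := Nat.ModEq.add_left_cancel' i h3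
      have h5 := Nat.ModEq.eq_of_lt_of_lt h4 h1 h2
      exact Fin.ext h5
    · exact absurd hab (hxF _)
    · exact absurd hab.symm (hxF _)
    · exact Fin.ext (by omega)
  have hg0bij : ∀ i, Function.Bijective (fun k : Fin (2 * m + 1) => if k.1 < 2 * m then F (i + k.1) else x) := by
    intro i
    rw [Fintype.bijective_iff_injective_and_card]
    exact ⟨hg0inj i, by rw [hcard, Fintype.card_fin]⟩
  -- minimal gap
  have hex : ∃ τ, (0 < τ ∧ τ < 2 * m) ∧ ∃ i, G.Adj x (F i) ∧ G.Adj x (F (i + τ)) := by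
    have h2 := hdeg x
    obtain ⟨y, hy, z, hz, hyz⟩ := (Set.one_lt_ncard (Set.toFinite _)).1 h2
    rw [mem_neighborSet] at hy hz
    obtain ⟨a, ha⟩ := (hg0bij 0).2 y
    obtain ⟨b, hb⟩ := (hg0bij 0).2 z
    simp only [zero_add] at ha hb
    split_ifs at ha with ha'
    swap
    · exact absurd ha hy.ne
    split_ifs at hb with hb'
    swap
    · exact absurd hb hz.ne
    subst ha hb
    have hne : a.1 ≠ b.1 := by
      intro h; rw [h] at hyz; exact hyz rfl
    rcases lt_or_gt_of_ne hne with hlt | hlt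
    · exact ⟨b.1 - a.1, ⟨by omega, by omega⟩, a.1, hy, by rwa [show a.1 + (b.1 - a.1) = b.1 by omega]⟩
    · exact ⟨a.1 - b.1, ⟨by omega, by omega⟩, b.1, hz, by rwa [show b.1 + (a.1 - b.1) = a.1 by omega]⟩
  obtain ⟨⟨hτ0, hτ1⟩, i, hi0, hiτ⟩ := Nat.find_spec hex
  have hmin : ∀ s, 0 < s → s < 2 * m → ∀ i, G.Adj x (F i) → G.Adj x (F (i + s)) → Nat.find hex ≤ s :=
    fun s h1 h2 i h3 h4 => Nat.find_min' hex ⟨⟨h1, h2⟩, i, h3, h4⟩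
  generalize Nat.find hex = τ at hτ0 hτ1 hiτ hmin
  have hper : F (i + τ + (2 * m - τ)) = F i := by
    rw [hFeq, show i + τ + (2 * m - τ) = i + 2 * m by omega, Nat.add_mod_right]
  have hτm : τ ≤ 2 * m - τ := hmin _ (by omega) (by omega) (i + τ) hiτ (by rw [hper]; exact hi0)
  have hτe : τ % 2 = 0 := by
    have := hxcol _ _ hi0 hiτ
    omega
  let ev : Fin (2 * m + 1) ≃ V := Equiv.ofBijective _ (hg0bij i)
  have hev1 : ∀ k : Fin (2 * m + 1), k.1 < 2 * m → ev k = F (i + k.1) := fun k hk => if_pos hk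
  have hev2 : ∀ k : Fin (2 * m + 1), k.1 = 2 * m → ev k = x := fun k hk => if_neg (by omega)
  let ψ : V ↪ ℕ := ev.symm.toEmbedding.trans Fin.valEmbedding
  have hψ : ∀ k, ψ (ev k) = k.1 := by intro k; simp [ψ]
  have hadj : ∀ a b : Fin (2 * m + 1), (G.map ψ).Adj a.1 b.1 ↔ G.Adj (ev a) (ev b) := by
    intro a b
    rw [← hψ a, ← hψ b, map_adj_apply]
  have hlt : ∀ a b, (G.map ψ).Adj a b → b < 2 * m + 1 := by
    intro a b hab
    obtain ⟨u, v, _, _, rfl⟩ := (map_adj _ _ _ _).1 hab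
    exact (ev.symm v).2
  refine ⟨τ / 2, G.map ψ, by omega, by omega, ?_, ⟨⟨ev.symm, ?_⟩⟩⟩
  · have hxa : ∀ a, (G.map ψ).Adj (2 * m) a → a < 2 * m ∧ G.Adj x (F (i + a)) := by
      intro a ha
      have h1 := hlt _ _ ha
      have h2 := ha.ne
      have h3 := (hadj ⟨2 * m, by omega⟩ ⟨a, h1⟩).1 ha
      rw [hev2 _ rfl, hev1 _ (by simp only; omega)] at h3
      exact ⟨by omega, h3⟩
    refine ⟨?_, ?_, ?_, ?_, ?_, ?_, ?_, ?_⟩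
    · intro a b hab
      have := hlt _ _ hab
      omega
    · intro k hk
      have hk2 : (k + 1) % (2 * m) < 2 * m := Nat.mod_lt _ (by omega)
      have := (hadj ⟨k, by omega⟩ ⟨(k + 1) % (2 * m), by omega⟩)
      rw [hev1 _ hk, hev1 _ hk2] at this
      rw [this]
      have h3 : F (i + (k + 1) % (2 * m)) = F (i + k + 1) := by
        rw [hFeq, Nat.add_mod_mod, Nat.add_assoc]
      simp only
      rw [h3]
      exact hFadj _
    · have := hadj ⟨2 * m, by omega⟩ ⟨0, by omega⟩
      rw [hev2 _ rfl, hev1 _ (by simp only; omega)] at this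
      exact this.2 hi0
    · have := hadj ⟨2 * m, by omega⟩ ⟨2 * (τ / 2), by omega⟩
      rw [hev2 _ rfl, hev1 _ (by simp only; omega)] at this
      rw [this]
      simp only
      rwa [show 2 * (τ / 2) = τ by omega]
    · intro a ha
      obtain ⟨h1, h2⟩ := hxa a ha
      have h3 := hxcol _ _ hi0 h2
      refine ⟨by omega, ?_⟩
      by_cases h0 : a = 0
      · exact Or.inl h0
      · have := hmin a (by omega) h1 i hi0 h2
        right; omega
    · intro a b ha hb hab
      have := (hadj ⟨a, by omega⟩ ⟨b, by omega⟩).1 hab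
      rw [hev1 _ ha, hev1 _ hb] at this
      have h1 := c.valid this
      rw [Ne, hcol2] at h1
      simp only at h1
      omega
    · rw [edgeSet_map]
      exact (Set.ncard_image_le (Set.toFinite _)).trans hedge
    · intro k hk1 hk2
      rw [cycs_map_ncard, ← cycleCount_eq]
      exact hcnt _ (by omega) (by omega) ⟨(k + 3) / 2, by omega⟩
  · intro a b
    rw [comap_adj]
    have := hadj (ev.symm a) (ev.symm b)
    rw [Equiv.apply_symm_apply, Equiv.apply_symm_apply] at this
    exact this

end OB

namespace OB

/-- the graph on `2 * m + 1` vertices with edges `base m ++ S` -/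
def CG (m : ℕ) (S : List (ℕ × ℕ)) : SimpleGraph (Fin (2 * m + 1)) :=
  (gr ⊥ (base m ++ S)).comap Fin.val

def aB (L : List (ℕ × ℕ)) (a b : ℕ) : Bool :=
  !(Nat.beq a b) && L.any fun e => (Nat.beq e.1 a && Nat.beq e.2 b) || (Nat.beq e.1 b && Nat.beq e.2 a)

lemma aB_iff (L : List (ℕ × ℕ)) (a b : ℕ) : (gr ⊥ L).Adj a b ↔ aB L a b = true := by
  rw [gr_adj, aB]
  simp only [bot_adj, false_or, Bool.and_eq_true, List.any_eq_true, Bool.or_eq_true, Nat.beq_eq,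
    Bool.not_eq_true', ← Bool.not_eq_true]
  refine and_congr Iff.rfl ⟨?_, ?_⟩
  · rintro (h | h)
    · exact ⟨_, h, Or.inl ⟨rfl, rfl⟩⟩
    · exact ⟨_, h, Or.inr ⟨rfl, rfl⟩⟩
  · rintro ⟨⟨x, y⟩, h, ⟨h1, h2⟩ | ⟨h1, h2⟩⟩
    · left; simp only at h1 h2; rwa [← h1, ← h2]
    · right; simp only at h1 h2; rwa [← h1, ← h2]

instance decCG (m : ℕ) (S : List (ℕ × ℕ)) : DecidableRel (CG m S).Adj := fun a b =>
  decidable_of_iff (aB (base m ++ S) a.val b.val = true) (aB_iff _ _ _).symm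

def dg {V : Type} [Fintype V] (G : SimpleGraph V) [DecidableRel G.Adj] (a : V) : ℕ :=
  (Finset.univ.filter fun b => G.Adj a b).card

/-- an isomorphism invariant -/
def inv {V : Type} [Fintype V] (G : SimpleGraph V) [DecidableRel G.Adj] : ℕ :=
  ∑ a, ∑ b, if G.Adj a b then dg G a * dg G b else 0

lemma dg_iso {V W : Type} [Fintype V] [Fintype W] (G : SimpleGraph V) (H : SimpleGraph W)
    [DecidableRel G.Adj] [DecidableRel H.Adj] (e : G ≃g H) (a : V) : dg H (e a) = dg G a := by
  symm
  refine Finset.card_bij (fun b _ => e b) ?_ ?_ ?_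
  · intro b hb
    have hb' : G.Adj a b := by simpa using hb
    have := e.map_adj_iff.2 hb'
    simpa using this
  · intro b _ c _ h
    exact e.injective h
  · intro b hb
    refine ⟨e.symm b, ?_, by simp⟩
    have : H.Adj (e a) (e (e.symm b)) := by simpa using hb
    simpa using e.map_adj_iff.1 this

lemma inv_iso {V W : Type} [Fintype V] [Fintype W] (G : SimpleGraph V) (H : SimpleGraph W)
    [DecidableRel G.Adj] [DecidableRel H.Adj] (e : G ≃g H) : inv G = inv H := by
  refine Fintype.sum_equiv e.toEquiv _ _ fun a => Fintype.sum_equiv e.toEquiv _ _ fun b => ?_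
  change _ = if H.Adj (e a) (e b) then dg H (e a) * dg H (e b) else 0
  rw [dg_iso G H e, dg_iso G H e]
  simp only [e.map_adj_iff]

lemma dg_ncard {V : Type} [Fintype V] (G : SimpleGraph V) [DecidableRel G.Adj] (a : V) :
    (G.neighborSet a).ncard = dg G a := by
  rw [dg, ← Set.ncard_coe_finset]
  congr 1
  ext b; simp

lemma CG_map (m : ℕ) (S : List (ℕ × ℕ)) (h : ∀ e ∈ base m ++ S, e.1 < 2 * m + 1 ∧ e.2 < 2 * m + 1) :
    (CG m S).map (Fin.valEmbedding : Fin (2 * m + 1) ↪ ℕ) = gr ⊥ (base m ++ S) := by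
  ext a b
  rw [map_adj]
  constructor
  · rintro ⟨x, y, hxy, rfl, rfl⟩
    exact hxy
  · intro hab
    have h2 := hab
    rw [gr_adj] at h2
    have h3 : a < 2 * m + 1 ∧ b < 2 * m + 1 := by
      rcases h2 with h2 | ⟨-, h2 | h2⟩
      · exact h2.elim
      · exact h _ h2
      · exact (h _ h2).symm
    exact ⟨⟨a, h3.1⟩, ⟨b, h3.2⟩, hab, rfl, rfl⟩

lemma CG_good (m : ℕ) (S : List (ℕ × ℕ)) (h2 : 2 ≤ m) (h8 : m ≤ 8) (hS : S ∈ TAB m)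
    (hb : ∀ e ∈ base m ++ S, e.1 < 2 * m + 1 ∧ e.2 < 2 * m + 1)
    (hlen : S.length ≤ 4)
    (hd : ∀ a : Fin (2 * m + 1), 2 ≤ dg (CG m S) a)
    (hc : ∀ a b : Fin (2 * m + 1), (CG m S).Adj a b →
      (a.val + a.val / (2 * m)) % 2 ≠ (b.val + b.val / (2 * m)) % 2)
    (hk : ∀ i < m - 1, cntT (2 * i + 4) 0 (base m ++ S) = 4) :
    IsOddlyRBipancyclic (CG m S) 4 ∧ (CG m S).edgeSet.ncard ≤ 2 * m + 5 := by
  have ok := mok m h2 h8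
  have hfin0 : (⊥ : SimpleGraph ℕ).edgeSet.Finite := by simp
  obtain ⟨hS1, hS2⟩ := ok.tb S hS
  have hvalS : Val ⊥ (base m ++ S) := by
    apply val_iff _ _ _ hS2
    intro e he
    have : e.1 < 17 ∧ e.2 < 17 ∧ e.1 ≠ e.2 := by
      rcases List.mem_append.1 he with he | he
      · exact ok.bnd e (List.mem_append_left _ he)
      · exact hS1 e he
    exact ⟨this.1, this.2.1, this.2.2, by simp⟩
  refine ⟨⟨?_, ?_, ?_, ?_⟩, ?_⟩
  · exact ⟨Coloring.mk (fun a => (⟨(a.val + a.val / (2 * m)) % 2, Nat.mod_lt _ (by norm_num)⟩ : Fin 2))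
      (fun {a b} hab h => hc a b hab (congrArg Fin.val h))⟩
  · rw [Fintype.card_fin]; exact ⟨m, rfl⟩
  · intro a
    rw [dg_ncard]; exact hd a
  · intro k hk4 hkv hev
    rw [Fintype.card_fin] at hkv
    obtain ⟨j, hj⟩ := hev
    obtain ⟨i, rfl⟩ : ∃ i, k = (2 * i + 1) + 3 := ⟨j - 2, by omega⟩
    rw [cycleCount_eq, ← cycs_map_ncard _ (Fin.valEmbedding : Fin (2 * m + 1) ↪ ℕ), CG_map m S hb,
      gr_cycs _ _ 0 ⊥ Rep.zero hfin0 hvalS, hk i (by omega)]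
    have e0 : (cycs (⊥ : SimpleGraph ℕ) (2 * i + 1)).ncard = 0 := by
      rw [Set.ncard_eq_zero (cycs_finite _ _ hfin0), Set.eq_empty_iff_forall_notMem]
      rintro E ⟨⟨f, hf, rfl⟩, hE⟩
      have := hE ⟨0, rfl⟩
      simp at this
    rw [e0]
  · have h1 := gr_ncard _ _ hfin0 hvalS
    rw [← CG_map m S hb, edgeSet_map] at h1
    have h3 : ((fun e => (Fin.valEmbedding : Fin (2 * m + 1) ↪ ℕ).sym2Map e) '' (CG m S).edgeSet).ncard =
        (CG m S).edgeSet.ncard := Set.ncard_image_of_injective _ (Fin.valEmbedding.sym2Map.injective)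
    have h4 := h3.symm.trans h1
    simp [ok.len] at h4
    omega

def S4 : Fin 2 → List (ℕ × ℕ) := ![[(8, 2), (0, 5), (4, 7)], [(8, 2), (4, 7), (6, 3)]]
def S6 : Fin 5 → List (ℕ × ℕ) := ![[(12, 2), (0, 7), (0, 9), (6, 11)],
  [(12, 2), (0, 7), (6, 9), (6, 11)], [(12, 2), (4, 7), (4, 9), (10, 5)],
  [(12, 2), (4, 9), (6, 3), (8, 3)], [(12, 2), (4, 9), (6, 9), (8, 3)]]

set_option maxRecDepth 100000 in
lemma pos4 (i : Fin 2) : IsOddlyRBipancyclic (CG 4 (S4 i)) 4 ∧ (CG 4 (S4 i)).edgeSet.ncard ≤ 13 := by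
  revert i
  have h1 : ∀ i, S4 i ∈ TAB 4 := by decide +kernel
  have h2 : ∀ i, ∀ e ∈ base 4 ++ S4 i, e.1 < 2 * 4 + 1 ∧ e.2 < 2 * 4 + 1 := by decide +kernel
  have h3 : ∀ i, (S4 i).length ≤ 4 := by decide +kernel
  have h4 : ∀ i, ∀ a : Fin (2 * 4 + 1), 2 ≤ dg (CG 4 (S4 i)) a := by decide +kernel
  have h5 : ∀ i, ∀ a b : Fin (2 * 4 + 1), (CG 4 (S4 i)).Adj a b →
      (a.val + a.val / (2 * 4)) % 2 ≠ (b.val + b.val / (2 * 4)) % 2 := by decide +kernel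
  have h6 : ∀ i, ∀ j < 4 - 1, cntT (2 * j + 4) 0 (base 4 ++ S4 i) = 4 := by decide +kernel
  exact fun i => CG_good 4 _ (by norm_num) (by norm_num) (h1 i) (h2 i) (h3 i) (h4 i) (h5 i) (h6 i)

set_option maxRecDepth 100000 in
lemma pos6 (i : Fin 5) : IsOddlyRBipancyclic (CG 6 (S6 i)) 4 ∧ (CG 6 (S6 i)).edgeSet.ncard ≤ 17 := by
  revert i
  have h1 : ∀ i, S6 i ∈ TAB 6 := by decide +kernel
  have h2 : ∀ i, ∀ e ∈ base 6 ++ S6 i, e.1 < 2 * 6 + 1 ∧ e.2 < 2 * 6 + 1 := by decide +kernel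
  have h3 : ∀ i, (S6 i).length ≤ 4 := by decide +kernel
  have h4 : ∀ i, ∀ a : Fin (2 * 6 + 1), 2 ≤ dg (CG 6 (S6 i)) a := by decide +kernel
  have h5 : ∀ i, ∀ a b : Fin (2 * 6 + 1), (CG 6 (S6 i)).Adj a b →
      (a.val + a.val / (2 * 6)) % 2 ≠ (b.val + b.val / (2 * 6)) % 2 := by decide +kernel
  have h6 : ∀ i, ∀ j < 6 - 1, cntT (2 * j + 4) 0 (base 6 ++ S6 i) = 4 := by decide +kernel
  exact fun i => CG_good 6 _ (by norm_num) (by norm_num) (h1 i) (h2 i) (h3 i) (h4 i) (h5 i) (h6 i)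

lemma neg4 (i j : Fin 2) (hij : i ≠ j) : IsEmpty (CG 4 (S4 i) ≃g CG 4 (S4 j)) := by
  have h : ∀ i j : Fin 2, i ≠ j → inv (CG 4 (S4 i)) ≠ inv (CG 4 (S4 j)) := by decide +kernel
  exact ⟨fun e => h i j hij (inv_iso _ _ e)⟩

lemma neg6 (i j : Fin 5) (hij : i ≠ j) : IsEmpty (CG 6 (S6 i) ≃g CG 6 (S6 j)) := by
  have h : ∀ i, inv (CG 6 (S6 i)) = (![278, 268, 256, 260, 258] : Fin 5 → ℕ) i := by decide +kernel
  refine ⟨fun e => hij ?_⟩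
  have := inv_iso _ _ e
  rw [h, h] at this
  have key : ∀ i j : Fin 5, (![278, 268, 256, 260, 258] : Fin 5 → ℕ) i =
      (![278, 268, 256, 260, 258] : Fin 5 → ℕ) j → i = j := by decide
  exact key i j this

/-- an isomorphism given by a table -/
lemma mkIso (m : ℕ) (S T : List (ℕ × ℕ)) (p : Fin (2 * m + 1) → Fin (2 * m + 1))
    (hp : ∀ a b, p a = p b → a = b)
    (h : ∀ a b, (CG m T).Adj (p a) (p b) ↔ (CG m S).Adj a b) : Nonempty (CG m T ≃g CG m S) :=
  ⟨RelIso.symm ⟨Equiv.ofBijective p (Finite.injective_iff_bijective.1 fun a b => hp a b), fun {a b} => h a b⟩⟩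

lemma reps4 (T : List (ℕ × ℕ)) (hT : T ∈ TAB 4) : ∃ i, Nonempty (CG 4 T ≃g CG 4 (S4 i)) := by
  simp only [TAB, List.mem_cons, List.not_mem_nil, or_false] at hT
  rcases hT with rfl | rfl | rfl
  · exact ⟨0, ⟨Iso.refl⟩⟩
  · exact ⟨0, mkIso 4 _ _ ![2,1,0,7,6,3,4,5,8] (by decide +kernel) (by decide +kernel)⟩
  · exact ⟨1, ⟨Iso.refl⟩⟩

lemma reps6 (T : List (ℕ × ℕ)) (hT : T ∈ TAB 6) : ∃ i, Nonempty (CG 6 T ≃g CG 6 (S6 i)) := by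
  simp only [TAB, List.mem_cons, List.not_mem_nil, or_false] at hT
  rcases hT with rfl | rfl | rfl | rfl | rfl | rfl | rfl | rfl | rfl | rfl
  · exact ⟨0, ⟨Iso.refl⟩⟩
  · exact ⟨1, ⟨Iso.refl⟩⟩
  · exact ⟨0, mkIso 6 _ _ ![2,1,0,11,10,9,8,3,4,5,6,7,12] (by decide +kernel) (by decide +kernel)⟩
  · exact ⟨1, mkIso 6 _ _ ![2,1,0,11,10,9,8,3,4,5,6,7,12] (by decide +kernel) (by decide +kernel)⟩
  · exact ⟨2, ⟨Iso.refl⟩⟩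
  · exact ⟨3, ⟨Iso.refl⟩⟩
  · exact ⟨4, ⟨Iso.refl⟩⟩
  · exact ⟨2, mkIso 6 _ _ ![2,1,0,11,10,5,6,7,8,9,4,3,12] (by decide +kernel) (by decide +kernel)⟩
  · exact ⟨4, mkIso 6 _ _ ![2,1,0,11,6,7,8,9,10,5,4,3,12] (by decide +kernel) (by decide +kernel)⟩
  · exact ⟨3, mkIso 6 _ _ ![2,1,0,11,6,7,8,9,10,5,4,3,12] (by decide +kernel) (by decide +kernel)⟩

lemma main_class {V : Type} [Fintype V] (G : SimpleGraph V) (m : ℕ) (hm : 2 ≤ m)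
    (hcard : Fintype.card V = 2 * m + 1) (hG : IsOddlyRBipancyclic G 4)
    (hedge : G.edgeSet.ncard ≤ 2 * m + 5) :
    m ≤ 8 ∧ ∃ S ∈ TAB m, Nonempty (G ≃g CG m S) := by
  obtain ⟨t, Γ, h1, h2, h3, h4⟩ := extract G m hm hcard hG hedge
  have h8 := bound h3 hm
  obtain ⟨S, hS, rfl⟩ := classify h3 hm h8 h1 h2
  exact ⟨h8, S, hS, h4⟩

lemma small {V : Type} [Fintype V] (G : SimpleGraph V) (hG : IsOddlyRBipancyclic G 4) :
    5 ≤ Fintype.card V := by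
  classical
  obtain ⟨⟨c⟩, hodd, hdeg, -⟩ := hG
  by_contra hlt
  obtain ⟨m, hm⟩ := hodd
  have : Nonempty V := Fintype.card_pos_iff.1 (by omega)
  obtain ⟨x⟩ := this
  obtain ⟨y, hy⟩ := Set.nonempty_of_ncard_ne_zero (s := G.neighborSet x) (by have := hdeg x; omega)
  have hy : G.Adj x y := hy
  -- the neighbourhoods of adjacent vertices are disjoint
  have hdis : Disjoint (G.neighborSet x) (G.neighborSet y) := by
    rw [Set.disjoint_left]
    intro z hz1 hz2
    have a1 := c.valid hy
    have a2 := c.valid (show G.Adj x z from hz1)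
    have a3 := c.valid (show G.Adj y z from hz2)
    omega
  have h1 := Set.ncard_union_eq hdis (Set.toFinite _) (Set.toFinite _)
  have h2 := Set.ncard_le_card (G.neighborSet x ∪ G.neighborSet y)
  rw [Nat.card_eq_fintype_card] at h2
  have := hdeg x
  have := hdeg y
  omega

end OB

theorem oddly_4_bipancyclic_classification :
    (ExactlyNUpToIso 4 2 9 13 ∧
    ExactlyNUpToIso 4 5 13 17) ∧
    (∀ (V : Type) [Fintype V] (G : SimpleGraph V),
      IsOddlyRBipancyclic G 4 → G.edgeSet.ncard ≤ Fintype.card V + 4 →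
      Fintype.card V ∈ ({9, 13} : Set ℕ)) := by
  refine ⟨⟨⟨fun i => OB.CG 4 (OB.S4 i), OB.neg4, OB.pos4, ?_⟩,
    ⟨fun i => OB.CG 6 (OB.S6 i), OB.neg6, OB.pos6, ?_⟩⟩, ?_⟩
  · intro W _ G hc he hG
    obtain ⟨-, S, hS, ⟨e⟩⟩ := OB.main_class G 4 (by norm_num) hc hG he
    obtain ⟨i, ⟨e'⟩⟩ := OB.reps4 S hS
    exact ⟨i, ⟨e.trans e'⟩⟩
  · intro W _ G hc he hG
    obtain ⟨-, S, hS, ⟨e⟩⟩ := OB.main_class G 6 (by norm_num) hc hG he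
    obtain ⟨i, ⟨e'⟩⟩ := OB.reps6 S hS
    exact ⟨i, ⟨e.trans e'⟩⟩
  · intro V _ G hG he
    have h5 := OB.small G hG
    obtain ⟨m, hm⟩ := hG.2.1
    obtain ⟨h8, S, hS, -⟩ := OB.main_class G m (by omega) hm hG (by omega)
    have h2 : 2 ≤ m := by omega
    rw [hm]
    clear hm he
    interval_cases m <;> simp [OB.TAB] at hS ⊢
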